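/- Let 𝒴 ⊆ L^0(Ω,𝐅_T,P) be a vector subspace (not necessarily finite-dimensional) containing ℝ^N_0. Then NCA(𝒴) holds if and only if for every Y ∈ 𝒴 the set ℳ_e(span({Y} ∪ ℝ^N_0)) is nonempty, where span({Y} ∪ ℝ^N_0) is the linear span in L^0(Ω,𝐅_T,P) of the single random vector Y together with ℝ^N_0. -/

import Mathlib

open MeasureTheory Filter Topology

namespace CollectiveArb

variable {Ω : Type*}

/-- Terminal gains `K_i` of admissible (predictable) strategies for an agent with
filtration `F`, trading the assets indexed by `A`, over times `1,…,T`. -/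
def gainsSet {J : ℕ} (F : ℕ → MeasurableSpace Ω) (T : ℕ)
    (A : Finset (Fin J)) (X : Fin J → ℕ → Ω → ℝ) : Set (Ω → ℝ) :=
  { g | ∃ H : Fin J → ℕ → Ω → ℝ,
      (∀ j ∈ A, ∀ s, 1 ≤ s → s ≤ T → Measurable[F (s - 1)] (H j s)) ∧
      g = fun ω => ∑ j ∈ A, ∑ s ∈ Finset.Icc 1 T, H j s ω * (X j s ω - X j (s - 1) ω) }

/-- No collective arbitrage for the gains sets `K` and the exchange set `Y`:
`(K₁ × ⋯ × K_N + Y) ∩ L⁰₊ = {0}`. -/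
def NCA {N : ℕ} [MeasurableSpace Ω] (P : Measure Ω)
    (K : Fin N → Set (Ω → ℝ)) (Y : Set (Fin N → Ω → ℝ)) : Prop :=
  ∀ k : Fin N → Ω → ℝ, ∀ y ∈ Y, (∀ i, k i ∈ K i) →
    (∀ i, ∀ᵐ ω ∂P, 0 ≤ k i ω + y i ω) →
    ∀ i, (fun ω => k i ω + y i ω) =ᵐ[P] fun _ => (0 : ℝ)

/-- `K^𝒴 = ⨉ᵢ (Kᵢ − L⁰₊(ℱᵢ_T)) + 𝒴`. -/
def KY {N : ℕ} [MeasurableSpace Ω] (P : Measure Ω)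
    (FT : Fin N → MeasurableSpace Ω)
    (K : Fin N → Set (Ω → ℝ)) (Y : Set (Fin N → Ω → ℝ)) : Set (Fin N → Ω → ℝ) :=
  { f | ∃ (k l y : Fin N → Ω → ℝ), y ∈ Y ∧ (∀ i, k i ∈ K i) ∧
      (∀ i, Measurable[FT i] (l i) ∧ (∀ᵐ ω ∂P, 0 ≤ l i ω)) ∧
      ∀ i, f i = fun ω => k i ω - l i ω + y i ω }

/-- `ℝ^N_0`: zero-sum deterministic exchanges, viewed as constant random vectors. -/
def zeroSum (Ω : Type*) (N : ℕ) : Set (Fin N → Ω → ℝ) :=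
  { y | ∃ x : Fin N → ℝ, (∑ i, x i) = 0 ∧ ∀ i, y i = fun _ => x i }

/-- `span(ℝ^N_0, Y_1, …, Y_R)`: the finite-dimensional space of exchanges generated
by `ℝ^N_0` and the random vectors `Ys 1, …, Ys R`. -/
def spanExch {N R : ℕ} (Ys : Fin R → Fin N → Ω → ℝ) : Set (Fin N → Ω → ℝ) :=
  { y | ∃ (x : Fin N → ℝ) (c : Fin R → ℝ), (∑ i, x i) = 0 ∧
      ∀ i, y i = fun ω => x i + ∑ r, c r * Ys r i ω }

/-- `span(𝒴₀ ∪ {g})` for a vector subspace `𝒴₀`. -/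
def spanWith {N : ℕ} (Y0 : Set (Fin N → Ω → ℝ)) (g : Fin N → Ω → ℝ) :
    Set (Fin N → Ω → ℝ) :=
  { y | ∃ w ∈ Y0, ∃ c : ℝ, ∀ i, y i = fun ω => w i ω + c * g i ω }

/-- Equivalent martingale measures `Mᵢₑ` for the assets in `A`, w.r.t. the filtration `F`. -/
def martMeasures {J : ℕ} [MeasurableSpace Ω] (P : Measure Ω)
    (F : ℕ → MeasurableSpace Ω) (T : ℕ) (A : Finset (Fin J))
    (X : Fin J → ℕ → Ω → ℝ) : Set (Measure Ω) :=
  { Q | IsProbabilityMeasure Q ∧ Q ≪ P ∧ P ≪ Q ∧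
      ∀ j ∈ A, (∀ t, t ≤ T → Integrable (X j t) Q) ∧
        ∀ s t, s ≤ t → t ≤ T → X j s =ᵐ[Q] Q[X j t | F s] }

/-- Equivalent collective martingale measures `ℳₑ(𝒴)`. -/
def MeY {J N : ℕ} [MeasurableSpace Ω] (P : Measure Ω)
    (F : Fin N → ℕ → MeasurableSpace Ω) (T : ℕ) (assets : Fin N → Finset (Fin J))
    (X : Fin J → ℕ → Ω → ℝ) (Y : Set (Fin N → Ω → ℝ)) : Set (Fin N → Measure Ω) :=
  { Q | (∀ i, Q i ∈ martMeasures P (F i) T (assets i) X) ∧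
      (∀ y ∈ Y, ∀ i, Integrable (y i) (Q i)) ∧
      ∀ y ∈ Y, (∑ i, ∫ ω, y i ω ∂(Q i)) ≤ 0 }

/-- `ℳ^φ_e(𝒴) = {Q ∈ ℳₑ(𝒴) : E_{Qⁱ}[|φⁱ|] < ∞ ∀ i}`. -/
def MeYphi {J N : ℕ} [MeasurableSpace Ω] (P : Measure Ω)
    (F : Fin N → ℕ → MeasurableSpace Ω) (T : ℕ) (assets : Fin N → Finset (Fin J))
    (X : Fin J → ℕ → Ω → ℝ) (Y : Set (Fin N → Ω → ℝ))
    (φ : Fin N → Ω → ℝ) : Set (Fin N → Measure Ω) :=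
  { Q | Q ∈ MeY P F T assets X Y ∧ ∀ i, Integrable (φ i) (Q i) }

/-- Closedness of a set of random vectors under componentwise `P`-a.s. convergence
of sequences (within `L⁰(Ω, 𝐅_T, P)`). -/
def ClosedAS {N : ℕ} [MeasurableSpace Ω] (P : Measure Ω)
    (FT : Fin N → MeasurableSpace Ω) (S : Set (Fin N → Ω → ℝ)) : Prop :=
  ∀ (f : ℕ → Fin N → Ω → ℝ) (g : Fin N → Ω → ℝ),
    (∀ n, f n ∈ S) → (∀ i, Measurable[FT i] (g i)) →
    (∀ i, ∀ᵐ ω ∂P, Tendsto (fun n => f n i ω) atTop (𝓝 (g i ω))) →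
    g ∈ S

/-- Collective superhedging price `ρ^𝒴₊(f)` (with `inf ∅ = +∞`). -/
noncomputable def rhoPlus {N : ℕ} [MeasurableSpace Ω] (P : Measure Ω)
    (K : Fin N → Set (Ω → ℝ)) (Y : Set (Fin N → Ω → ℝ))
    (f : Fin N → Ω → ℝ) : EReal :=
  sInf { z : EReal | ∃ m : Fin N → ℝ, z = ((∑ i, m i : ℝ) : EReal) ∧
      ∃ k : Fin N → Ω → ℝ, (∀ i, k i ∈ K i) ∧ ∃ y ∈ Y,
        ∀ i, ∀ᵐ ω ∂P, f i ω ≤ m i + k i ω + y i ω }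

/-- Collective subhedging price `ρ^𝒴₋(f)` (with `sup ∅ = −∞`). -/
noncomputable def rhoMinus {N : ℕ} [MeasurableSpace Ω] (P : Measure Ω)
    (K : Fin N → Set (Ω → ℝ)) (Y : Set (Fin N → Ω → ℝ))
    (f : Fin N → Ω → ℝ) : EReal :=
  sSup { z : EReal | ∃ m : Fin N → ℝ, z = ((∑ i, m i : ℝ) : EReal) ∧
      ∃ k : Fin N → Ω → ℝ, (∀ i, k i ∈ K i) ∧ ∃ y ∈ Y,
        ∀ i, ∀ᵐ ω ∂P, m i + k i ω - y i ω ≤ f i ω }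

/-- `ρ^𝒴₊(f)` is attained. -/
def rhoPlusAttained {N : ℕ} [MeasurableSpace Ω] (P : Measure Ω)
    (K : Fin N → Set (Ω → ℝ)) (Y : Set (Fin N → Ω → ℝ))
    (f : Fin N → Ω → ℝ) : Prop :=
  ∃ (m : Fin N → ℝ) (k y : Fin N → Ω → ℝ), y ∈ Y ∧ (∀ i, k i ∈ K i) ∧
    (∀ i, ∀ᵐ ω ∂P, f i ω ≤ m i + k i ω + y i ω) ∧
    rhoPlus P K Y f = ((∑ i, m i : ℝ) : EReal)

/-- `ρ^𝒴₋(f)` is attained. -/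
def rhoMinusAttained {N : ℕ} [MeasurableSpace Ω] (P : Measure Ω)
    (K : Fin N → Set (Ω → ℝ)) (Y : Set (Fin N → Ω → ℝ))
    (f : Fin N → Ω → ℝ) : Prop :=
  ∃ (m : Fin N → ℝ) (k y : Fin N → Ω → ℝ), y ∈ Y ∧ (∀ i, k i ∈ K i) ∧
    (∀ i, ∀ᵐ ω ∂P, m i + k i ω - y i ω ≤ f i ω) ∧
    rhoMinus P K Y f = ((∑ i, m i : ℝ) : EReal)

/-- `f` is `𝒴`-collectively replicable: `f ∈ ℝ^N + (K₁ × ⋯ × K_N) + 𝒴` in `L⁰`. -/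
def Replicable {N : ℕ} [MeasurableSpace Ω] (P : Measure Ω)
    (K : Fin N → Set (Ω → ℝ)) (Y : Set (Fin N → Ω → ℝ))
    (f : Fin N → Ω → ℝ) : Prop :=
  ∃ (m : Fin N → ℝ) (k y : Fin N → Ω → ℝ), y ∈ Y ∧ (∀ i, k i ∈ K i) ∧
    ∀ i, f i =ᵐ[P] fun ω => m i + k i ω + y i ω

/-!
Place the agents on disjoint copies of `Ω`, and call a set observable at time `s` when its trace on
the `i`-th copy belongs to `ℱⁱ_s` for every `i`. The agents together become a single investor who
first chooses an exchange without any information and then trades the assets with increasing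
information, so collective arbitrage for a finite-dimensional space of exchanges is ordinary
arbitrage for a finite list of trades.

For such a list, no arbitrage makes the gains plus the nonnegative functions a closed cone `C`. This
goes by induction from the last trade to the first: positions `h` are compactified to
`h / (1 + |h|)`, a cluster point is chosen measurably, and where it has modulus one the trade is
redundant. After a change of measure that makes the payoffs square-integrable, exhaustion over the
dual cone of `C ∩ L²` gives a strictly positive functional vanishing on the gains, which is an
equivalent measure making every trade fair. Its restrictions to the copies of `Ω` are martingale
measures up to a factor, which is the same for all agents because deterministic zero-sum exchanges
are fair.

No collective arbitrage for `𝒴` tests one `y ∈ 𝒴` at a time, hence the one-dimensional spans.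
-/

section UpperClosure

variable {α : Type*} {m0 : MeasurableSpace α} {μ : Measure α}
  {𝓗 : MeasurableSpace α} {A : Submodule ℝ (α → ℝ)} {f g : α → ℝ}

/-- The cone `A + L⁰₊` of functions dominating a member of `A` almost everywhere: the claims whose
payment can be covered, up to disposal, by a gain. -/
def aeUpperClosure (μ : Measure α) (A : Submodule ℝ (α → ℝ)) : PointedCone ℝ (α → ℝ) where
  carrier := {f | ∃ a ∈ A, a ≤ᵐ[μ] f}
  zero_mem' := ⟨0, A.zero_mem, EventuallyLE.rfl⟩
  add_mem' := by
    rintro f g ⟨a, ha, haf⟩ ⟨b, hb, hbg⟩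
    exact ⟨a + b, A.add_mem ha hb, by filter_upwards [haf, hbg] with x using add_le_add⟩
  smul_mem' := by
    rintro c f ⟨a, ha, haf⟩
    refine ⟨c.1 • a, A.smul_mem _ ha, ?_⟩
    filter_upwards [haf] with x hx using mul_le_mul_of_nonneg_left hx c.2

/-- Closedness under almost everywhere limits of sequences. -/
def ClosedAE (μ : Measure α) (S : Set (α → ℝ)) : Prop :=
  ∀ ⦃f : ℕ → α → ℝ⦄ ⦃g : α → ℝ⦄, (∀ n, f n ∈ S) →
    (∀ᵐ x ∂μ, Tendsto (fun n => f n x) atTop (𝓝 (g x))) → g ∈ S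

/-- The no-arbitrage condition `A ∩ L⁰₊ = {0}`. -/
def NoArbitrage (μ : Measure α) (A : Submodule ℝ (α → ℝ)) : Prop :=
  ∀ a ∈ A, 0 ≤ᵐ[μ] a → a =ᵐ[μ] 0

/-- Stability of a space of gains under scaling of the positions by an amount known at `𝓗`. -/
def MulStable (𝓗 : MeasurableSpace α) (A : Submodule ℝ (α → ℝ)) : Prop :=
  ∀ h : α → ℝ, Measurable[𝓗] h → ∀ a ∈ A, h * a ∈ A

lemma mem_aeUpperClosure_of_ae_le (hf : f ∈ aeUpperClosure μ A) (hfg : f ≤ᵐ[μ] g) :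
    g ∈ aeUpperClosure μ A := by
  obtain ⟨a, ha, haf⟩ := hf
  exact ⟨a, ha, haf.trans hfg⟩

lemma le_aeUpperClosure (hf : f ∈ A) : f ∈ aeUpperClosure μ A := ⟨f, hf, EventuallyLE.rfl⟩

lemma MulStable.mul_mem_aeUpperClosure (hA : MulStable 𝓗 A) {h : α → ℝ} (hh : Measurable[𝓗] h)
    (h0 : 0 ≤ h) (hf : f ∈ aeUpperClosure μ A) : h * f ∈ aeUpperClosure μ A := by
  obtain ⟨a, ha, haf⟩ := hf
  refine ⟨h * a, hA h hh a ha, ?_⟩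
  filter_upwards [haf] with x hx using mul_le_mul_of_nonneg_left hx (h0 x)

lemma indicator_eq_indicator_one_mul {s : Set α} : s.indicator f = s.indicator 1 * f := by
  ext x
  by_cases hx : x ∈ s <;> simp [hx]

lemma MulStable.indicator_mem (hA : MulStable 𝓗 A) {s : Set α} (hs : MeasurableSet[𝓗] s)
    (hf : f ∈ A) : s.indicator f ∈ A := by
  rw [indicator_eq_indicator_one_mul]
  exact hA _ (measurable_one.indicator hs) f hf

lemma MulStable.indicator_mem_aeUpperClosure (hA : MulStable 𝓗 A) {s : Set α}
    (hs : MeasurableSet[𝓗] s) (hf : f ∈ aeUpperClosure μ A) :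
    s.indicator f ∈ aeUpperClosure μ A := by
  obtain ⟨a, ha, haf⟩ := hf
  refine ⟨s.indicator a, hA.indicator_mem hs ha, ?_⟩
  filter_upwards [haf] with x hx using Set.indicator_le_indicator hx

lemma exists_measurable_cluster {p : ℕ → α → ℝ} {c : ℝ}
    (hp : ∀ n, Measurable[𝓗] (p n)) (hb : ∀ n x, |p n x| ≤ c) :
    ∃ (q : α → ℝ) (τ : ℕ → α → ℕ), Measurable[𝓗] q ∧ (∀ x, |q x| ≤ c) ∧
      (∀ k, Measurable[𝓗] (τ k)) ∧ (∀ x, Tendsto (fun k => τ k x) atTop atTop) ∧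
      ∀ x, Tendsto (fun k => p (τ k x) x) atTop (𝓝 (q x)) := by
  classical
  let q : α → ℝ := fun x => limsup (fun n => p n x) atTop
  have hq : Measurable[𝓗] q := Measurable.limsup hp
  have hbdd (x : α) : IsBoundedUnder (· ≤ ·) atTop fun n => p n x :=
    isBoundedUnder_of ⟨c, fun n => (abs_le.1 (hb n x)).2⟩
  have hcobdd (x : α) : IsCoboundedUnder (· ≤ ·) atTop fun n => p n x :=
    IsBoundedUnder.isCoboundedUnder_le <| isBoundedUnder_of ⟨-c, fun n => (abs_le.1 (hb n x)).1⟩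
  have hex (k : ℕ) (x : α) : ∃ n, k ≤ n ∧ |p n x - q x| < 1 / ((k : ℝ) + 1) := by
    have hcluster : MapClusterPt (q x) atTop fun n => p n x :=
      MapClusterPt.limsup (hcobdd x) (hbdd x)
    have hball := hcluster.frequently (Metric.ball_mem_nhds (q x) (Nat.one_div_pos_of_nat (n := k)))
    obtain ⟨n, hn, hkn⟩ := (hball.and_eventually (eventually_ge_atTop k)).exists
    exact ⟨n, hkn, hn⟩
  have hlim (x : α) : Tendsto (fun k => p (Nat.find (hex k x)) x) atTop (𝓝 (q x)) :=
    tendsto_iff_dist_tendsto_zero.2 <| squeeze_zero (fun _ => dist_nonneg)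
      (fun k => (Nat.find_spec (hex k x)).2.le) tendsto_one_div_add_atTop_nhds_zero_nat
  refine ⟨q, fun k x => Nat.find (hex k x), hq,
    fun x => le_of_tendsto (hlim x).abs (Eventually.of_forall fun k => hb _ x), fun k => ?_,
    fun x => tendsto_atTop_mono (fun k => (Nat.find_spec (hex k x)).1) tendsto_id, hlim⟩
  exact measurable_find (hex k) fun n =>
    (MeasurableSet.const _).inter (measurableSet_lt ((hp n).sub hq).abs measurable_const)

lemma ClosedAE.random_index_mem {f : ℕ → α → ℝ} {τ : α → ℕ}
    (hcl : ClosedAE μ (aeUpperClosure μ A : Set (α → ℝ))) (hA : MulStable 𝓗 A)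
    (hτ : Measurable[𝓗] τ) (hf : ∀ n, f n ∈ aeUpperClosure μ A) :
    (fun x => f (τ x) x) ∈ aeUpperClosure μ A := by
  refine hcl (f := fun M => ∑ n ∈ Finset.range M, (τ ⁻¹' {n}).indicator (f n))
    (fun M => sum_mem fun n _ =>
      hA.indicator_mem_aeUpperClosure (hτ (measurableSet_singleton n)) (hf n))
    (Eventually.of_forall fun x => tendsto_const_nhds.congr' ?_)
  filter_upwards [eventually_gt_atTop (τ x)] with M hM
  rw [Finset.sum_apply, Finset.sum_eq_single_of_mem (τ x) (Finset.mem_range.2 hM)]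
  · simp
  · exact fun n _ hn => Set.indicator_of_notMem (s := τ ⁻¹' {n}) (Ne.symm hn) (f n)

end UpperClosure

section Trade

variable {α : Type*}

/-- An investment opportunity: any amount measurable with respect to `info` can be invested in
`payoff`. -/
structure Trade (α : Type*) where
  /-- The information available when the position is chosen. -/
  info : MeasurableSpace α
  /-- The payoff of a unit position. -/
  payoff : α → ℝ

/-- The gains `h * payoff` from `info`-measurable positions `h` in a single trade. -/
def Trade.gains (p : Trade α) : Submodule ℝ (α → ℝ) where
  carrier := {f | ∃ h : α → ℝ, Measurable[p.info] h ∧ f = h * p.payoff}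
  zero_mem' := ⟨0, measurable_const, by rw [zero_mul]⟩
  add_mem' := by
    rintro _ _ ⟨h, hh, rfl⟩ ⟨k, hk, rfl⟩
    exact ⟨h + k, hh.add hk, by rw [add_mul]⟩
  smul_mem' := by
    rintro c _ ⟨h, hh, rfl⟩
    exact ⟨c • h, hh.const_smul c, by rw [smul_mul_assoc]⟩

/-- The total gains from a list of trades. -/
def gains (L : List (Trade α)) : Submodule ℝ (α → ℝ) := ⨆ p ∈ L, p.gains

lemma Trade.mul_payoff_mem_gains {p : Trade α} {h : α → ℝ} (hh : Measurable[p.info] h) :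
    h * p.payoff ∈ p.gains := ⟨h, hh, rfl⟩

lemma Trade.indicator_payoff_mem_gains {p : Trade α} {s : Set α} (hs : MeasurableSet[p.info] s) :
    s.indicator p.payoff ∈ p.gains :=
  ⟨_, Measurable.indicator (m := p.info) measurable_const hs, indicator_eq_indicator_one_mul⟩

lemma gains_nil : gains ([] : List (Trade α)) = ⊥ := by simp [gains]

lemma gains_cons (p : Trade α) (L : List (Trade α)) : gains (p :: L) = p.gains ⊔ gains L := by
  simp [gains, iSup_or, iSup_sup_eq]

lemma gains_le_gains {p : Trade α} {L : List (Trade α)} (hp : p ∈ L) : p.gains ≤ gains L :=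
  le_iSup₂_of_le p hp le_rfl

lemma mulStable_gains {𝓗 : MeasurableSpace α} {L : List (Trade α)} (hL : ∀ p ∈ L, 𝓗 ≤ p.info) :
    MulStable 𝓗 (gains L) := by
  intro h hh
  change gains L ≤ (gains L).comap (LinearMap.mulLeft ℝ h)
  refine iSup₂_le fun p hp => ?_
  rintro _ ⟨k, hk, rfl⟩
  refine gains_le_gains hp ⟨h * k, (hh.mono (hL p hp) le_rfl).mul hk, ?_⟩
  simp only [LinearMap.mulLeft_apply, mul_assoc]

end Trade

section Closedness

variable {α : Type*} {m0 : MeasurableSpace α} {μ : Measure α} {A : Submodule ℝ (α → ℝ)}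
  {p : Trade α} {f g : α → ℝ}

lemma mem_aeUpperClosure_gains_sup :
    f ∈ aeUpperClosure μ (p.gains ⊔ A) ↔
      ∃ h : α → ℝ, Measurable[p.info] h ∧ f - h * p.payoff ∈ aeUpperClosure μ A := by
  constructor
  · rintro ⟨_, hb, hbf⟩
    obtain ⟨_, ⟨h, hh, rfl⟩, a, ha, rfl⟩ := Submodule.mem_sup.1 hb
    exact ⟨h, hh, a, ha, by filter_upwards [hbf] with x hx using le_sub_iff_add_le'.2 hx⟩
  · rintro ⟨h, hh, a, ha, haf⟩
    exact ⟨_, Submodule.add_mem_sup (Trade.mul_payoff_mem_gains hh) ha, by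
      filter_upwards [haf] with x hx using le_sub_iff_add_le'.1 hx⟩

/-- Positions may be unbounded; dividing by `1 + |h|` brings them into `[-1, 1]`. -/
lemma exists_compactified_position (hA : MulStable p.info A)
    (hf : f ∈ aeUpperClosure μ (p.gains ⊔ A)) :
    ∃ k : α → ℝ, Measurable[p.info] k ∧ (∀ x, |k x| ≤ 1) ∧
      (fun x => (1 - |k x|) * f x - k x * p.payoff x) ∈ aeUpperClosure μ A := by
  obtain ⟨h, hh, hf⟩ := mem_aeUpperClosure_gains_sup.1 hf
  have hpos (x : α) : 0 < 1 + |h x| := by positivity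
  have habs (x : α) : |h x / (1 + |h x|)| = |h x| / (1 + |h x|) := by
    rw [abs_div, abs_of_pos (hpos x)]
  have hscale : Measurable[p.info] fun x => (1 + |h x|)⁻¹ :=
    (by fun_prop : Measurable fun y : ℝ => (1 + |y|)⁻¹).comp hh
  have hquot : Measurable[p.info] fun x => h x / (1 + |h x|) :=
    (by fun_prop : Measurable fun y : ℝ => y / (1 + |y|)).comp hh
  refine ⟨fun x => h x / (1 + |h x|), hquot, fun x => ?_, ?_⟩
  · rw [habs, div_le_one (hpos x)]
    linarith
  · convert hA.mul_mem_aeUpperClosure hscale (fun x => (inv_pos.2 (hpos x)).le) hf using 1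
    funext x
    simp only [habs, Pi.mul_apply, Pi.sub_apply]
    field_simp [(hpos x).ne']
    ring

lemma exists_compactified_limit (hcl : ClosedAE μ (aeUpperClosure μ A : Set (α → ℝ)))
    (hA : MulStable p.info A) {f : ℕ → α → ℝ} (hf : ∀ n, f n ∈ aeUpperClosure μ (p.gains ⊔ A))
    (hfg : ∀ᵐ x ∂μ, Tendsto (fun n => f n x) atTop (𝓝 (g x))) :
    ∃ q : α → ℝ, Measurable[p.info] q ∧ (∀ x, |q x| ≤ 1) ∧
      (fun x => (1 - |q x|) * g x - q x * p.payoff x) ∈ aeUpperClosure μ A := by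
  choose k hk hk1 hkf using fun n => exists_compactified_position hA (hf n)
  obtain ⟨q, τ, hq, hq1, hτ, hτ_top, hτ_lim⟩ := exists_measurable_cluster hk hk1
  refine ⟨q, hq, hq1, hcl (fun n => hcl.random_index_mem hA (hτ n) hkf) ?_⟩
  filter_upwards [hfg] with x hx
  exact ((tendsto_const_nhds.sub (hτ_lim x).abs).mul (hx.comp (hτ_top x))).sub
    ((hτ_lim x).mul_const _)

lemma exists_indicator_payoff_ae_eq (hNA : NoArbitrage μ (p.gains ⊔ A)) (hA : MulStable p.info A)
    {s : Set α} (hs : MeasurableSet[p.info] s) {q : α → ℝ} (hq : Measurable[p.info] q)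
    (hq1 : ∀ x ∈ s, |q x| = 1)
    (hcover : s.indicator (-(q * p.payoff)) ∈ aeUpperClosure μ A) :
    ∃ a ∈ A, s.indicator p.payoff =ᵐ[μ] a := by
  obtain ⟨a, ha, hle⟩ := hcover
  have hqs : Measurable[p.info] (s.indicator q) := hq.indicator hs
  have hmul : s.indicator (-(q * p.payoff)) = -(s.indicator q * p.payoff) := by
    rw [Set.indicator_neg']
    exact congrArg _ (funext fun x => Set.indicator_mul_left s q p.payoff)
  rw [hmul] at hle
  have hzero := hNA (-(s.indicator q * p.payoff + a))
    (neg_mem (Submodule.add_mem_sup (Trade.mul_payoff_mem_gains hqs) ha)) (by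
      filter_upwards [hle] with x hx using neg_nonneg.2 (le_neg_iff_add_nonpos_left.1 hx))
  refine ⟨-(s.indicator q * a), neg_mem (hA _ hqs a ha), ?_⟩
  filter_upwards [hzero] with x hx
  by_cases hxs : x ∈ s
  · have hsq : q x * q x = 1 := by rw [← abs_mul_abs_self, hq1 x hxs, one_mul]
    simp only [Pi.neg_apply, Pi.add_apply, Pi.mul_apply, Pi.zero_apply,
      Set.indicator_of_mem hxs] at hx ⊢
    linear_combination (-q x) * hx - p.payoff x * hsq
  · simp only [Pi.neg_apply, Pi.mul_apply, Set.indicator_of_notMem hxs, zero_mul, neg_zero]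

lemma ClosedAE.indicator_mem_of_redundant (hcl : ClosedAE μ (aeUpperClosure μ A : Set (α → ℝ)))
    (hA : MulStable p.info A) {s : Set α} (hs : MeasurableSet[p.info] s)
    (hred : ∃ a ∈ A, s.indicator p.payoff =ᵐ[μ] a)
    {f : ℕ → α → ℝ} (hf : ∀ n, f n ∈ aeUpperClosure μ (p.gains ⊔ A))
    (hfg : ∀ᵐ x ∂μ, Tendsto (fun n => f n x) atTop (𝓝 (g x))) :
    s.indicator g ∈ aeUpperClosure μ A := by
  obtain ⟨a, ha, hsa⟩ := hred
  refine hcl (f := fun n => s.indicator (f n)) (fun n => ?_) ?_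
  · obtain ⟨h, hh, hfn⟩ := mem_aeUpperClosure_gains_sup.1 (hf n)
    refine mem_aeUpperClosure_of_ae_le (add_mem (hA.indicator_mem_aeUpperClosure hs hfn)
      (le_aeUpperClosure (hA h hh a ha))) ?_
    filter_upwards [hsa] with x hx
    simp only [Pi.add_apply, Pi.mul_apply, ← hx]
    by_cases hxs : x ∈ s <;> simp [hxs]
  · filter_upwards [hfg] with x hx
    by_cases hxs : x ∈ s <;> simp [hxs, hx]

lemma ClosedAE.gains_sup (hcl : ClosedAE μ (aeUpperClosure μ A : Set (α → ℝ)))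
    (hA : MulStable p.info A) (hNA : NoArbitrage μ (p.gains ⊔ A)) :
    ClosedAE μ (aeUpperClosure μ (p.gains ⊔ A) : Set (α → ℝ)) := by
  intro f g hf hfg
  obtain ⟨q, hq, hq1, hqg⟩ := exists_compactified_limit hcl hA hf hfg
  let s : Set α := {x | |q x| = 1}
  have hs : MeasurableSet[p.info] s :=
    hq ((measurableSet_singleton (1 : ℝ)).preimage measurable_id.abs)
  have hcover : s.indicator (-(q * p.payoff)) ∈ aeUpperClosure μ A := by
    convert hA.indicator_mem_aeUpperClosure hs hqg using 1
    exact Set.indicator_congr fun x hx => by simp [show |q x| = 1 from hx]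
  have hgs : s.indicator g ∈ aeUpperClosure μ A := hcl.indicator_mem_of_redundant hA hs
    (exists_indicator_payoff_ae_eq hNA hA hs hq (fun _ hx => hx) hcover) hf hfg
  let r : α → ℝ := fun x => (1 - |q x|)⁻¹
  have hr : Measurable[p.info] r :=
    (by fun_prop : Measurable fun y : ℝ => (1 - |y|)⁻¹).comp hq
  have hr0 : 0 ≤ r := fun x => inv_nonneg.2 (sub_nonneg.2 (hq1 x))
  refine mem_aeUpperClosure_gains_sup.2 ⟨r * q, hr.mul hq, ?_⟩
  convert add_mem hgs (hA.mul_mem_aeUpperClosure hr hr0 hqg) using 1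
  funext x
  by_cases hx : |q x| = 1
  · simp [s, r, hx]
  · have hx' : 1 - |q x| ≠ 0 := sub_ne_zero.2 (Ne.symm hx)
    simp only [s, r, Pi.sub_apply, Pi.add_apply, Pi.mul_apply, Set.indicator, Set.mem_ofPred_eq, hx,
      if_false]
    field_simp
    ring

lemma closedAE_bot : ClosedAE μ (aeUpperClosure μ (⊥ : Submodule ℝ (α → ℝ)) : Set (α → ℝ)) := by
  intro f g hf hfg
  have hf0 (n : ℕ) : 0 ≤ᵐ[μ] f n := by
    obtain ⟨a, ha, haf⟩ := hf n
    rwa [(Submodule.mem_bot ℝ).1 ha] at haf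
  refine ⟨0, Submodule.zero_mem _, ?_⟩
  filter_upwards [ae_all_iff.2 hf0, hfg] with x hx hlim using ge_of_tendsto' hlim hx

lemma NoArbitrage.mono {B : Submodule ℝ (α → ℝ)} (hB : NoArbitrage μ B) (h : A ≤ B) :
    NoArbitrage μ A := fun a ha => hB a (h ha)

theorem NoArbitrage.closedAE_gains {L : List (Trade α)}
    (hL : L.Pairwise fun p q => p.info ≤ q.info) (hNA : NoArbitrage μ (gains L)) :
    ClosedAE μ (aeUpperClosure μ (gains L) : Set (α → ℝ)) := by
  induction L with
  | nil => exact gains_nil (α := α) ▸ closedAE_bot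
  | cons p L ih =>
    rw [List.pairwise_cons] at hL
    rw [gains_cons] at hNA ⊢
    exact (ih hL.2 (hNA.mono le_sup_right)).gains_sup (mulStable_gains hL.1) hNA

end Closedness

section KrepsYan

variable {α : Type*} {m0 : MeasurableSpace α} {μ : Measure α} {A : Submodule ℝ (α → ℝ)}

/-- The square-integrable part of `A + L⁰₊`, as a cone in `L²`. -/
def l2UpperClosure (hcl : ClosedAE μ (aeUpperClosure μ A : Set (α → ℝ))) :
    ProperCone ℝ (Lp ℝ 2 μ) where
  carrier := {f | ⇑f ∈ aeUpperClosure μ A}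
  zero_mem' := mem_aeUpperClosure_of_ae_le (zero_mem _) (Lp.coeFn_zero ℝ 2 μ).symm.le
  add_mem' hf hg := mem_aeUpperClosure_of_ae_le (add_mem hf hg) (Lp.coeFn_add _ _).symm.le
  smul_mem' c _ hf :=
    mem_aeUpperClosure_of_ae_le (Submodule.smul_mem _ c hf) (Lp.coeFn_smul c.1 _).symm.le
  isClosed' := IsSeqClosed.isClosed fun u f hu hf => by
    obtain ⟨φ, -, hφ⟩ := (tendstoInMeasure_of_tendsto_Lp hf).exists_seq_tendsto_ae
    exact hcl (fun n => hu (φ n)) hφ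

lemma mem_l2UpperClosure {hcl : ClosedAE μ (aeUpperClosure μ A : Set (α → ℝ))} {f : Lp ℝ 2 μ} :
    f ∈ l2UpperClosure hcl ↔ ∃ a ∈ A, a ≤ᵐ[μ] f := Iff.rfl

variable [IsFiniteMeasure μ]

lemma exists_ae_greatest {𝒮 : Set (Set α)} (hne : 𝒮.Nonempty)
    (hmeas : ∀ s ∈ 𝒮, NullMeasurableSet s μ)
    (hunion : ∀ s : ℕ → Set α, (∀ n, s n ∈ 𝒮) → ∃ t ∈ 𝒮, ∀ n, s n ≤ᵐ[μ] t) :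
    ∃ t ∈ 𝒮, ∀ s ∈ 𝒮, s ≤ᵐ[μ] t := by
  obtain ⟨u, -, hu_lim, hu⟩ := exists_seq_tendsto_sSup (hne.image μ) (OrderTop.bddAbove _)
  choose s hs hsu using hu
  obtain ⟨t, ht, hst⟩ := hunion s hs
  have htop : sSup (μ '' 𝒮) ≤ μ t :=
    le_of_tendsto' hu_lim fun n => hsu n ▸ measure_mono_ae (hst n)
  refine ⟨t, ht, fun s' hs' => ?_⟩
  obtain ⟨v, hv, hle⟩ := hunion (fun n => if n = 0 then t else s') (fun n => by
    split_ifs <;> assumption)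
  have hvt : μ v ≤ μ t := (le_sSup (Set.mem_image_of_mem μ hv)).trans htop
  have htv : t =ᵐ[μ] v := ae_eq_of_ae_subset_of_measure_ge (hle 0) hvt
    (hmeas t ht) (measure_ne_top μ v)
  exact (hle 1).trans htv.symm.le

lemma exists_pos_summable_smul {E : Type*} [NormedAddCommGroup E] [NormedSpace ℝ E]
    [CompleteSpace E] (u : ℕ → E) :
    ∃ c : ℕ → ℝ, (∀ n, 0 < c n) ∧ Summable fun n => c n • u n := by
  refine ⟨fun n => (1 / 2) ^ n / (1 + ‖u n‖), fun n => by positivity,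
    .of_norm_bounded summable_geometric_two fun n => ?_⟩
  rw [norm_smul, Real.norm_of_nonneg (by positivity), div_mul_eq_mul_div]
  exact div_le_of_le_mul₀ (by positivity) (by positivity)
    (mul_le_mul_of_nonneg_left (by linarith) (by positivity))

lemma indicatorConstLp_one_nonneg {s : Set α} (hs : MeasurableSet s) :
    0 ≤ indicatorConstLp 2 hs (measure_ne_top μ s) (1 : ℝ) := by
  rw [← Lp.coeFn_nonneg]
  filter_upwards [indicatorConstLp_coeFn (p := 2) (hs := hs) (hμs := measure_ne_top μ s)
    (c := (1 : ℝ))] with x hx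
  rw [hx]
  exact Set.indicator_nonneg (fun _ _ => zero_le_one) x

variable {D : ProperCone ℝ (Lp ℝ 2 μ)}

lemma nonneg_of_mem_innerDual (hD : ∀ f, 0 ≤ f → f ∈ D) {g : Lp ℝ 2 μ}
    (hg : g ∈ ProperCone.innerDual (D : Set (Lp ℝ 2 μ))) : 0 ≤ g := by
  rw [← Lp.coeFn_nonneg]
  refine ae_nonneg_of_forall_setIntegral_nonneg ((Lp.memLp g).integrable one_le_two)
    fun s hs _ => ?_
  rw [← L2.inner_indicatorConstLp_one hs (measure_ne_top μ s)]
  exact ProperCone.mem_innerDual.1 hg (hD _ (indicatorConstLp_one_nonneg hs))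

lemma exists_mem_innerDual_setIntegral_pos (hD : ∀ f ∈ D, f ≤ 0 → f = 0) {s : Set α}
    (hs : MeasurableSet s) (hμs : μ s ≠ 0) :
    ∃ g ∈ ProperCone.innerDual (D : Set (Lp ℝ 2 μ)), 0 < ∫ x in s, g x ∂μ := by
  have hsD : -indicatorConstLp 2 hs (measure_ne_top μ s) (1 : ℝ) ∉ D := fun h => hμs <| by
    have h0 := neg_eq_zero.1 (hD _ h (neg_nonpos.2 (indicatorConstLp_one_nonneg hs)))
    rw [← indicatorConstLp_empty (c := (1 : ℝ)), indicatorConstLp_inj (hc := one_ne_zero)] at h0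
    exact (measure_congr h0).trans measure_empty
  obtain ⟨g, hg, hlt⟩ := ProperCone.hyperplane_separation' D hsD
  refine ⟨g, ProperCone.mem_innerDual.2 fun f hf => hg f hf, ?_⟩
  rwa [inner_neg_left, neg_lt_zero, L2.inner_indicatorConstLp_one] at hlt

lemma exists_mem_innerDual_forall_pos (hD : ∀ f, 0 ≤ f → f ∈ D) {u : ℕ → Lp ℝ 2 μ}
    (hu : ∀ n, u n ∈ ProperCone.innerDual (D : Set (Lp ℝ 2 μ))) :
    ∃ g ∈ ProperCone.innerDual (D : Set (Lp ℝ 2 μ)), ∀ n, ∀ᵐ x ∂μ, 0 < u n x → 0 < g x := by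
  obtain ⟨c, hc, hsum⟩ := exists_pos_summable_smul u
  have hcu (n : ℕ) : c n • u n ∈ ProperCone.innerDual (D : Set (Lp ℝ 2 μ)) :=
    ProperCone.smul_mem _ (hu n) (hc n).le
  refine ⟨∑' n, c n • u n, ?_, fun n => ?_⟩
  · exact (ProperCone.isClosed _).mem_of_tendsto hsum.hasSum
      (Eventually.of_forall fun s => sum_mem fun n _ => hcu n)
  · have hle : c n • u n ≤ ∑' n, c n • u n :=
      hsum.le_tsum n fun k _ => nonneg_of_mem_innerDual hD (hcu k)
    filter_upwards [(Lp.coeFn_le _ _).2 hle, Lp.coeFn_smul (c n) (u n)] with x hx hsmul hpos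
    rw [hsmul] at hx
    exact (mul_pos (hc n) hpos).trans_le hx

theorem exists_pos_mem_innerDual (hpos : ∀ f, 0 ≤ f → f ∈ D) (hneg : ∀ f ∈ D, f ≤ 0 → f = 0) :
    ∃ g ∈ ProperCone.innerDual (D : Set (Lp ℝ 2 μ)), ∀ᵐ x ∂μ, 0 < g x := by
  let support (g : Lp ℝ 2 μ) : Set α := {x | 0 < g x}
  have hmeas (g : Lp ℝ 2 μ) : MeasurableSet (support g) :=
    measurableSet_lt measurable_const (Lp.stronglyMeasurable g).measurable
  obtain ⟨_, ⟨g, hg, rfl⟩, hmax⟩ := exists_ae_greatest (μ := μ)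
    (𝒮 := support '' ProperCone.innerDual (D : Set (Lp ℝ 2 μ)))
    ⟨_, 0, zero_mem _, rfl⟩ (by rintro _ ⟨g, -, rfl⟩; exact (hmeas g).nullMeasurableSet)
    (fun s hs => by
      choose u hu hus using hs
      obtain ⟨g, hg, hug⟩ := exists_mem_innerDual_forall_pos hpos hu
      exact ⟨_, ⟨g, hg, rfl⟩, fun n => hus n ▸ hug n⟩)
  refine ⟨g, hg, by_contra fun hnull => ?_⟩
  obtain ⟨k, hk, hint⟩ := exists_mem_innerDual_setIntegral_pos hneg (hmeas g).compl hnull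
  refine hint.not_ge (integral_nonpos_of_ae ?_)
  rw [EventuallyLE, ae_restrict_iff' (hmeas g).compl]
  filter_upwards [hmax _ ⟨k, hk, rfl⟩] with x hx hxg using not_lt.1 (mt hx hxg)

theorem NoArbitrage.exists_pos_integral_mul_eq_zero (hNA : NoArbitrage μ A)
    (hcl : ClosedAE μ (aeUpperClosure μ A : Set (α → ℝ))) :
    ∃ g : α → ℝ, MemLp g 2 μ ∧ (∀ᵐ x ∂μ, 0 < g x) ∧
      ∀ a ∈ A, MemLp a 2 μ → ∫ x, g x * a x ∂μ = 0 := by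
  have hpos (f : Lp ℝ 2 μ) (hf : 0 ≤ f) : f ∈ l2UpperClosure hcl :=
    mem_l2UpperClosure.2 ⟨0, zero_mem _, (Lp.coeFn_nonneg f).2 hf⟩
  have hneg (f : Lp ℝ 2 μ) (hf : f ∈ l2UpperClosure hcl) (hf0 : f ≤ 0) : f = 0 := by
    obtain ⟨a, ha, haf⟩ := mem_l2UpperClosure.1 hf
    have hf0' : f ≤ᵐ[μ] 0 := ((Lp.coeFn_le f 0).2 hf0).trans (Lp.coeFn_zero ℝ 2 μ).le
    have ha0 : -a =ᵐ[μ] 0 := hNA (-a) (neg_mem ha) (by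
      filter_upwards [haf, hf0'] with x hx hx0 using neg_nonneg.2 (hx.trans hx0))
    refine (Lp.eq_zero_iff_ae_eq_zero).2 ?_
    filter_upwards [haf, hf0', ha0] with x hx hx0 hxa
    exact le_antisymm hx0 ((neg_eq_zero.1 hxa).symm.trans_le hx)
  obtain ⟨g, hg, hg_pos⟩ := exists_pos_mem_innerDual hpos hneg
  have hint_nonneg (a : α → ℝ) (ha : a ∈ A) (ha2 : MemLp a 2 μ) : 0 ≤ ∫ x, g x * a x ∂μ := by
    have hmem : ha2.toLp a ∈ l2UpperClosure hcl :=
      mem_l2UpperClosure.2 ⟨a, ha, ha2.coeFn_toLp.symm.le⟩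
    refine (ProperCone.mem_innerDual.1 hg hmem).trans_eq ?_
    rw [L2.inner_def]
    refine integral_congr_ae ?_
    filter_upwards [ha2.coeFn_toLp] with x hx
    rw [hx]
    rfl
  refine ⟨g, Lp.memLp g, hg_pos, fun a ha ha2 => le_antisymm ?_ (hint_nonneg a ha ha2)⟩
  simpa [integral_neg] using hint_nonneg (-a) (neg_mem ha) ha2.neg

end KrepsYan

section ChangeOfMeasure

variable {α : Type*} {m0 : MeasurableSpace α} {μ ν : Measure α} {A : Submodule ℝ (α → ℝ)}

lemma exists_equivalent_finite_measure {g : α → ℝ} (hg : Integrable g μ)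
    (hpos : ∀ᵐ x ∂μ, 0 < g x) :
    ∃ ν : Measure α, IsFiniteMeasure ν ∧ ν ≪ μ ∧ μ ≪ ν ∧ ∀ f : α → ℝ,
      (Integrable f ν ↔ Integrable (fun x => g x * f x) μ) ∧
        ∫ x, f x ∂ν = ∫ x, g x * f x ∂μ := by
  have hgm : AEMeasurable (fun x => ENNReal.ofReal (g x)) μ := hg.aemeasurable.ennreal_ofReal
  have hfin : ∀ᵐ x ∂μ, ENNReal.ofReal (g x) < ⊤ :=
    Eventually.of_forall fun _ => ENNReal.ofReal_lt_top
  refine ⟨μ.withDensity fun x => ENNReal.ofReal (g x), isFiniteMeasure_withDensity_ofReal hg.2,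
    withDensity_absolutelyContinuous _ _, withDensity_absolutelyContinuous' hgm ?_,
    fun f => ?_⟩
  · filter_upwards [hpos] with x hx using (ENNReal.ofReal_pos.2 hx).ne'
  · have hsmul : (fun x => (ENNReal.ofReal (g x)).toReal • f x) =ᵐ[μ] fun x => g x * f x := by
      filter_upwards [hpos] with x hx
      rw [ENNReal.toReal_ofReal hx.le, smul_eq_mul]
    exact ⟨(integrable_withDensity_iff_integrable_smul₀' hgm hfin).trans
      (integrable_congr hsmul),
      (integral_withDensity_eq_integral_toReal_smul₀ hgm hfin f).trans (integral_congr_ae hsmul)⟩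

lemma exists_equivalent_measure_memLp_two [IsFiniteMeasure μ] {S : Finset (α → ℝ)}
    (hS : ∀ f ∈ S, Measurable f) :
    ∃ ν : Measure α, IsFiniteMeasure ν ∧ ν ≪ μ ∧ μ ≪ ν ∧ ∀ f ∈ S, MemLp f 2 ν := by
  let q : α → ℝ := fun x => 1 + ∑ f ∈ S, f x ^ 2
  have hq1 (x : α) : 1 ≤ q x := le_add_of_nonneg_right (Finset.sum_nonneg fun _ _ => sq_nonneg _)
  have hq0 (x : α) : 0 < q x := one_pos.trans_le (hq1 x)
  have hqm : Measurable q :=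
    measurable_const.add (Finset.measurable_fun_sum S fun f hf => (hS f hf).pow_const 2)
  have hqint : Integrable (fun x => (q x)⁻¹) μ :=
    Integrable.of_bound hqm.inv.aestronglyMeasurable 1 <| Eventually.of_forall fun x => by
      rw [Real.norm_of_nonneg (inv_nonneg.2 (hq0 x).le)]
      exact inv_le_one_of_one_le₀ (hq1 x)
  obtain ⟨ν, hν, hνμ, hμν, hint⟩ :=
    exists_equivalent_finite_measure hqint (Eventually.of_forall fun x => inv_pos.2 (hq0 x))
  refine ⟨ν, hν, hνμ, hμν, fun f hf => ?_⟩
  rw [memLp_two_iff_integrable_sq (hS f hf).aestronglyMeasurable, (hint _).1]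
  refine Integrable.of_bound (hqm.inv.mul ((hS f hf).pow_const 2)).aestronglyMeasurable 1 <|
    Eventually.of_forall fun x => ?_
  have hfq : f x ^ 2 ≤ q x := (Finset.single_le_sum (f := fun f : α → ℝ => f x ^ 2)
    (fun _ _ => sq_nonneg _) hf).trans (le_add_of_nonneg_left zero_le_one)
  rw [Real.norm_of_nonneg (mul_nonneg (inv_nonneg.2 (hq0 x).le) (sq_nonneg _)), inv_mul_eq_div]
  exact (div_le_one (hq0 x)).2 hfq

lemma NoArbitrage.of_equivalent (hA : NoArbitrage μ A) (hμν : μ ≪ ν) (hνμ : ν ≪ μ) :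
    NoArbitrage ν A :=
  fun a ha ha0 => hνμ.ae_eq (hA a ha (hμν.ae_le ha0))

end ChangeOfMeasure

section FairTrade

variable {α : Type*} {m0 : MeasurableSpace α} {μ : Measure α}

/-- A trade is fair under `ν` if its payoff is integrable with vanishing conditional expectation
given `info`. -/
structure Trade.IsFair (p : Trade α) (ν : Measure α) : Prop where
  integrable : Integrable p.payoff ν
  setIntegral_eq_zero : ∀ s, MeasurableSet[p.info] s → ∫ x in s, p.payoff x ∂ν = 0

lemma Trade.IsFair.integral_mul_eq_zero [IsFiniteMeasure μ] {p : Trade α} (hp : p.IsFair μ)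
    (hm : p.info ≤ m0) {h : α → ℝ} (hh : Measurable[p.info] h)
    (hint : Integrable (h * p.payoff) μ) : ∫ x, (h * p.payoff) x ∂μ = 0 := by
  have hcond : (0 : α → ℝ) =ᵐ[μ] μ[p.payoff | p.info] :=
    ae_eq_condExp_of_forall_setIntegral_eq hm hp.integrable
      (fun _ _ _ => integrableOn_zero)
      (fun s hs _ => by simp [hp.setIntegral_eq_zero s hs]) aestronglyMeasurable_zero
  have hpull := condExp_mul_of_stronglyMeasurable_left hh.stronglyMeasurable hint hp.integrable
  rw [← integral_condExp hm, integral_congr_ae hpull]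
  refine integral_eq_zero_of_ae ?_
  filter_upwards [hcond] with x hx
  rw [Pi.mul_apply, ← hx, Pi.zero_apply, mul_zero]

lemma Trade.IsFair.indicator_mul [IsFiniteMeasure μ] {p : Trade α} (hp : p.IsFair μ)
    (hm : p.info ≤ m0) {s : Set α} (hs : MeasurableSet[p.info] s) {h : α → ℝ}
    (hh : Measurable[p.info] h) {c : ℝ} (hc : ∀ x ∈ s, |h x| ≤ c) :
    Integrable (s.indicator (h * p.payoff)) μ ∧ ∫ x, s.indicator (h * p.payoff) x ∂μ = 0 := by
  have hhs : Measurable[p.info] (s.indicator h) := hh.indicator hs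
  have heq : s.indicator (h * p.payoff) = s.indicator h * p.payoff :=
    funext fun x => Set.indicator_mul_left s h p.payoff
  have hint : Integrable (s.indicator (h * p.payoff)) μ := by
    rw [integrable_indicator_iff (hm s hs)]
    exact hp.integrable.integrableOn.bdd_mul (c := c) (hh.mono hm le_rfl).aestronglyMeasurable
      (ae_restrict_of_forall_mem (hm s hs) hc)
  refine ⟨hint, ?_⟩
  rw [heq] at hint ⊢
  exact hp.integral_mul_eq_zero hm hhs hint

lemma integrable_and_integral_eq_zero_of_aecover {φ : ℕ → Set α} (hφ : AECover μ atTop φ)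
    {f y : α → ℝ} (hy : Integrable y μ) (hyf : y ≤ᵐ[μ] f) (hf : ∀ n, IntegrableOn f (φ n) μ)
    (h0 : ∀ n, ∫ x in φ n, f x ∂μ = 0) : Integrable f μ ∧ ∫ x, f x ∂μ = 0 := by
  have hlim : Tendsto (fun n => ∫ x in φ n, (f - y) x ∂μ) atTop (𝓝 (-∫ x, y x ∂μ)) := by
    refine (hφ.integral_tendsto_of_countably_generated hy).neg.congr fun n => ?_
    rw [integral_sub' (hf n) hy.integrableOn, h0, zero_sub]
  have hsub : Integrable (f - y) μ :=
    hφ.integrable_of_integral_tendsto_of_nonneg_ae _ (fun n => (hf n).sub hy.integrableOn)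
      (by filter_upwards [hyf] with x hx using sub_nonneg.2 hx) hlim
  have hfint : Integrable f μ := by simpa only [sub_add_cancel] using hsub.add hy
  refine ⟨hfint, hφ.integral_eq_of_tendsto _ hfint ?_⟩
  simp only [h0, tendsto_const_nhds]

lemma aecover_abs_le {h : α → ℝ} (hh : Measurable h) :
    AECover μ atTop fun n : ℕ => {x | |h x| ≤ n} where
  ae_eventually_mem := Eventually.of_forall fun x =>
    (eventually_ge_atTop ⌈|h x|⌉₊).mono fun _ hn => Nat.ceil_le.1 hn
  measurableSet _ := measurableSet_le hh.abs measurable_const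

/-- A gain bounded below by an integrable function need not be a sum of integrable terms: truncate
the earliest position to `{|h| ≤ n}`, which keeps the remaining gain bounded below. -/
theorem integrable_and_integral_eq_zero_of_mem_gains [IsFiniteMeasure μ] {L : List (Trade α)}
    (hL : L.Pairwise fun p q => p.info ≤ q.info) (hm : ∀ p ∈ L, p.info ≤ m0)
    (hfair : ∀ p ∈ L, p.IsFair μ) {f y : α → ℝ} (hf : f ∈ gains L) (hy : Integrable y μ)
    (hyf : y ≤ᵐ[μ] f) : Integrable f μ ∧ ∫ x, f x ∂μ = 0 := by
  induction L generalizing f y with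
  | nil =>
    rw [gains_nil, Submodule.mem_bot] at hf
    subst hf
    exact ⟨integrable_zero _ _ _, by simp⟩
  | cons p L ih =>
    rw [List.pairwise_cons] at hL
    rw [List.forall_mem_cons] at hm hfair
    rw [gains_cons] at hf
    obtain ⟨_, ⟨h, hh, rfl⟩, b, hb, rfl⟩ := Submodule.mem_sup.1 hf
    have hcover := aecover_abs_le (μ := μ) (hh.mono hm.1 le_rfl)
    suffices hset : ∀ n : ℕ, IntegrableOn (h * p.payoff + b) {x | |h x| ≤ n} μ ∧
        ∫ x in {x | |h x| ≤ n}, (h * p.payoff + b) x ∂μ = 0 from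
      integrable_and_integral_eq_zero_of_aecover hcover hy hyf (fun n => (hset n).1)
        fun n => (hset n).2
    intro n
    let s : Set α := {x | |h x| ≤ n}
    have hs : MeasurableSet[p.info] s := hh (measurableSet_le measurable_id.abs measurable_const)
    obtain ⟨hpint, hp0⟩ := hfair.1.indicator_mul hm.1 hs hh fun x hx => hx
    have hyb : y - h * p.payoff ≤ᵐ[μ] b := by
      filter_upwards [hyf] with x hx using sub_le_iff_le_add'.2 hx
    have hysb : s.indicator y - s.indicator (h * p.payoff) ≤ᵐ[μ] s.indicator b := by
      filter_upwards [hyb] with x hx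
      rw [← Set.indicator_sub']
      exact Set.indicator_le_indicator hx
    obtain ⟨hbint, hb0⟩ := ih hL.2 hm.2 hfair.2 ((mulStable_gains hL.1).indicator_mem hs hb)
      ((hy.indicator (hm.1 s hs)).sub hpint) hysb
    rw [← integrable_indicator_iff (hm.1 s hs), ← integral_indicator (hm.1 s hs),
      Set.indicator_add']
    refine ⟨hpint.add hbint, ?_⟩
    rw [integral_add' hpint hbint, hp0, hb0, add_zero]

theorem noArbitrage_gains_of_isFair [IsFiniteMeasure μ] {L : List (Trade α)}
    (hL : L.Pairwise fun p q => p.info ≤ q.info) (hm : ∀ p ∈ L, p.info ≤ m0)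
    (hfair : ∀ p ∈ L, p.IsFair μ) : NoArbitrage μ (gains L) := by
  intro f hf hf0
  obtain ⟨hint, hf_integral⟩ := integrable_and_integral_eq_zero_of_mem_gains hL hm hfair hf
    (integrable_zero _ _ _) hf0
  exact (integral_eq_zero_iff_of_nonneg_ae hf0 hint).1 hf_integral

theorem NoArbitrage.exists_isFair [IsFiniteMeasure μ] {L : List (Trade α)}
    (hNA : NoArbitrage μ (gains L)) (hL : L.Pairwise fun p q => p.info ≤ q.info)
    (hm : ∀ p ∈ L, p.info ≤ m0) (hpay : ∀ p ∈ L, Measurable p.payoff)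
    {S : Finset (α → ℝ)} (hS : ∀ f ∈ S, Measurable f) :
    ∃ ν : Measure α, IsFiniteMeasure ν ∧ ν ≪ μ ∧ μ ≪ ν ∧ (∀ f ∈ S, Integrable f ν) ∧
      ∀ p ∈ L, p.IsFair ν := by
  classical
  obtain ⟨κ, _, hκμ, hμκ, hL2⟩ := exists_equivalent_measure_memLp_two (μ := μ)
    (S := S ∪ (L.map Trade.payoff).toFinset) (by
      simpa only [Finset.mem_union, List.mem_toFinset, List.mem_map, or_imp, forall_and,
        forall_exists_index, and_imp, forall_apply_eq_imp_iff₂] using ⟨hS, hpay⟩)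
  simp only [Finset.mem_union, List.mem_toFinset, List.mem_map, or_imp, forall_and,
    forall_exists_index, and_imp, forall_apply_eq_imp_iff₂] at hL2
  have hNAκ := hNA.of_equivalent hμκ hκμ
  obtain ⟨g, hg, hgpos, hg0⟩ := hNAκ.exists_pos_integral_mul_eq_zero (hNAκ.closedAE_gains hL)
  obtain ⟨ν, hν, hνκ, hκν, hdens⟩ :=
    exists_equivalent_finite_measure (hg.integrable one_le_two) hgpos
  refine ⟨ν, hν, hνκ.trans hκμ, hμκ.trans hκν,
    fun f hf => (hdens f).1.2 (hg.integrable_mul (hL2.1 f hf)), fun p hp =>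
    ⟨(hdens _).1.2 (hg.integrable_mul (hL2.2 p hp)), fun s hs => ?_⟩⟩
  have hs0 : MeasurableSet s := hm p hp s hs
  rw [← integral_indicator hs0, (hdens _).2]
  exact hg0 _ (gains_le_gains hp (Trade.indicator_payoff_mem_gains hs)) ((hL2.2 p hp).indicator hs0)

end FairTrade

section JointSpace

variable {ι β : Type*}

/-- The embedding of `Ω` as the `i`-th of the copies indexed by `ι`. -/
abbrev toCopy (i : ι) (ω : Ω) : Σ _ : ι, Ω := ⟨i, ω⟩

/-- The `σ`-algebra on copies of `Ω` indexed by `ι` whose traces on the copies are the `G i`: the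
joint information of agents who each observe their own copy. -/
@[reducible] def jointSpace (G : ι → MeasurableSpace Ω) : MeasurableSpace (Σ _ : ι, Ω) :=
  @Sigma.instMeasurableSpace ι (fun _ => Ω) G

lemma measurableSet_jointSpace {G : ι → MeasurableSpace Ω} {s : Set (Σ _ : ι, Ω)} :
    MeasurableSet[jointSpace G] s ↔ ∀ i, MeasurableSet[G i] (toCopy i ⁻¹' s) :=
  MeasurableSpace.measurableSet_iInf

lemma measurable_jointSpace [MeasurableSpace β] {G : ι → MeasurableSpace Ω}
    {f : (Σ _ : ι, Ω) → β} :
    Measurable[jointSpace G] f ↔ ∀ i, Measurable[G i] fun ω => f ⟨i, ω⟩ :=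
  ⟨fun hf i _ hs => measurableSet_jointSpace.1 (hf hs) i,
    fun hf _ hs => measurableSet_jointSpace.2 fun i => hf i hs⟩

lemma jointSpace_mono {G G' : ι → MeasurableSpace Ω} (h : G ≤ G') : jointSpace G ≤ jointSpace G' :=
  fun _ hs => measurableSet_jointSpace.2 fun i => h i _ (measurableSet_jointSpace.1 hs i)

lemma toCopy_injective (i : ι) : Function.Injective (toCopy i : Ω → Σ _ : ι, Ω) :=
  sigma_mk_injective (β := fun _ => Ω)

lemma preimage_image_toCopy (i : ι) (s : Set Ω) : toCopy i ⁻¹' (toCopy i '' s) = s :=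
  Set.preimage_image_eq s (toCopy_injective i)

lemma preimage_image_toCopy_of_ne {i j : ι} (h : j ≠ i) (s : Set Ω) :
    toCopy j ⁻¹' (toCopy i '' s) = ∅ :=
  Set.preimage_image_sigmaMk_of_ne (α := fun _ => Ω) h s

lemma measurableSet_jointSpace_image (G : ι → MeasurableSpace Ω) (i : ι) {s : Set Ω}
    (hs : MeasurableSet[G i] s) : MeasurableSet[jointSpace G] (toCopy i '' s) := by
  refine measurableSet_jointSpace.2 fun j => ?_
  rcases eq_or_ne j i with rfl | hji
  · rwa [preimage_image_toCopy]
  · rw [preimage_image_toCopy_of_ne hji]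
    exact @MeasurableSet.empty Ω (G j)

lemma measurableEmbedding_toCopy [MeasurableSpace Ω] (i : ι) :
    MeasurableEmbedding (toCopy i : Ω → Σ _ : ι, Ω) where
  injective := toCopy_injective i
  measurable := measurable_jointSpace.1 measurable_id i
  measurableSet_image' _ := measurableSet_jointSpace_image (fun _ => ‹MeasurableSpace Ω›) i

end JointSpace

section JointMeasure

variable {ι : Type*} {m0 : MeasurableSpace Ω} [Fintype ι] {Q Q' : ι → Measure Ω}

/-- The measure whose restriction to the `i`-th copy of `Ω` is `Q i`. -/
noncomputable def jointMeasure (Q : ι → Measure Ω) : Measure (Σ _ : ι, Ω) :=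
  ∑ i, (Q i).map (toCopy i)

instance [∀ i, IsFiniteMeasure (Q i)] : IsFiniteMeasure (jointMeasure Q) := by
  unfold jointMeasure
  infer_instance

lemma jointMeasure_apply {s : Set (Σ _ : ι, Ω)} :
    jointMeasure Q s = ∑ i, Q i (toCopy i ⁻¹' s) := by
  simp only [jointMeasure, Measure.finsetSum_apply, (measurableEmbedding_toCopy _).map_apply]

lemma jointMeasure_image (i : ι) (s : Set Ω) : jointMeasure Q (toCopy i '' s) = Q i s := by
  rw [jointMeasure_apply, Finset.sum_eq_single_of_mem i (Finset.mem_univ i), preimage_image_toCopy]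
  intro j _ hji
  rw [preimage_image_toCopy_of_ne hji, measure_empty]

lemma ae_jointMeasure_iff {p : (Σ _ : ι, Ω) → Prop} :
    (∀ᵐ x ∂jointMeasure Q, p x) ↔ ∀ i, ∀ᵐ ω ∂Q i, p ⟨i, ω⟩ := by
  rw [jointMeasure, ← Measure.sum_fintype, Measure.ae_sum_iff]
  exact forall_congr' fun i => (measurableEmbedding_toCopy i).ae_map_iff

lemma integrable_jointMeasure_iff {f : (Σ _ : ι, Ω) → ℝ} :
    Integrable f (jointMeasure Q) ↔ ∀ i, Integrable (fun ω => f ⟨i, ω⟩) (Q i) := by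
  simp only [jointMeasure, integrable_finsetSum_measure, Finset.mem_univ, true_implies]
  exact forall_congr' fun i => (measurableEmbedding_toCopy i).integrable_map_iff

lemma integral_jointMeasure {f : (Σ _ : ι, Ω) → ℝ} (hf : Integrable f (jointMeasure Q)) :
    ∫ x, f x ∂jointMeasure Q = ∑ i, ∫ ω, f ⟨i, ω⟩ ∂Q i := by
  rw [jointMeasure, integrable_finsetSum_measure] at hf
  rw [jointMeasure, integral_finsetSum_measure hf]
  exact Finset.sum_congr rfl fun i _ => (measurableEmbedding_toCopy i).integral_map f

lemma jointMeasure_absolutelyContinuous_iff :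
    jointMeasure Q ≪ jointMeasure Q' ↔ ∀ i, Q i ≪ Q' i := by
  refine ⟨fun h i s hs => ?_, fun h s hs => ?_⟩
  · rw [← jointMeasure_image] at hs ⊢
    exact h hs
  · rw [jointMeasure_apply, Finset.sum_eq_zero_iff] at hs ⊢
    exact fun i hi => h i (hs i hi)

lemma jointMeasure_comap (ν : Measure (Σ _ : ι, Ω)) :
    jointMeasure (fun i => ν.comap (toCopy i)) = ν := by
  have hrestrict (i : ι) :
      (ν.comap (toCopy i)).map (toCopy i) = ν.restrict (Set.range (toCopy i)) :=
    (measurableEmbedding_toCopy i).map_comap ν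
  have hdisjoint : Pairwise (Function.onFun Disjoint
      fun i => Set.range (toCopy i : Ω → Σ _ : ι, Ω)) := by
    refine fun i j hij => Set.disjoint_left.2 ?_
    rintro _ ⟨ω, rfl⟩ ⟨ω', h⟩
    exact hij (congrArg Sigma.fst h).symm
  have hunion : ⋃ i, Set.range (toCopy i : Ω → Σ _ : ι, Ω) = Set.univ :=
    Set.iUnion_eq_univ_iff.2 fun x => ⟨x.1, x.2, rfl⟩
  simp only [jointMeasure, hrestrict]
  rw [← Measure.sum_fintype, ← Measure.restrict_iUnion hdisjoint fun i =>
    (measurableEmbedding_toCopy i).measurableSet_range, hunion, Measure.restrict_univ]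

lemma isFair_jointMeasure_iff {G : ι → MeasurableSpace Ω} (hG : ∀ i, G i ≤ m0)
    {f : (Σ _ : ι, Ω) → ℝ} :
    Trade.IsFair ⟨jointSpace G, f⟩ (jointMeasure Q) ↔
      ∀ i, Trade.IsFair ⟨G i, fun ω => f ⟨i, ω⟩⟩ (Q i) := by
  have hsections {s : Set (Σ _ : ι, Ω)} (hs : MeasurableSet[jointSpace G] s)
      (hf : Integrable f (jointMeasure Q)) : ∫ x in s, f x ∂jointMeasure Q =
        ∑ i, ∫ ω in toCopy i ⁻¹' s, f ⟨i, ω⟩ ∂Q i := by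
    have hs0 := jointSpace_mono (G' := fun _ => m0) hG s hs
    rw [← integral_indicator hs0, integral_jointMeasure (hf.indicator hs0)]
    exact Finset.sum_congr rfl fun i _ =>
      integral_indicator (hG i _ (measurableSet_jointSpace.1 hs i))
  constructor
  · intro h i
    refine ⟨integrable_jointMeasure_iff.1 h.integrable i, fun s hs => ?_⟩
    have hs' := measurableSet_jointSpace_image G i hs
    rw [← h.setIntegral_eq_zero _ hs', hsections hs' h.integrable,
      Finset.sum_eq_single_of_mem i (Finset.mem_univ i),
      preimage_image_toCopy]
    intro j _ hji
    rw [preimage_image_toCopy_of_ne hji, setIntegral_empty]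
  · intro h
    have hf := integrable_jointMeasure_iff.2 fun i => (h i).integrable
    refine ⟨hf, fun s hs => ?_⟩
    rw [hsections hs hf]
    exact Finset.sum_eq_zero fun i _ =>
      (h i).setIntegral_eq_zero _ (measurableSet_jointSpace.1 hs i)

end JointMeasure

section ListsOfTrades

variable {α : Type*}

lemma gains_append (L L' : List (Trade α)) : gains (L ++ L') = gains L ⊔ gains L' := by
  simp only [gains, List.mem_append, iSup_or, iSup_sup_eq]

lemma mem_gains_iff_exists_sum {κ : Type*} [Fintype κ] {p : κ → Trade α} {L : List (Trade α)}
    (hL : ∀ q, q ∈ L ↔ ∃ k, p k = q) {f : α → ℝ} :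
    f ∈ gains L ↔ ∃ h : κ → α → ℝ,
      (∀ k, Measurable[(p k).info] (h k)) ∧ f = ∑ k, h k * (p k).payoff := by
  have hgains : gains L = ⨆ k ∈ Finset.univ, (p k).gains := by
    simp only [gains, hL, Finset.mem_univ, iSup_pos, iSup_exists]
    rw [iSup_comm]
    simp only [iSup_iSup_eq_right]
  rw [hgains, Submodule.mem_iSup_finset_iff_exists_sum]
  constructor
  · rintro ⟨g, rfl⟩
    choose h hh hg using fun k => (g k).2
    exact ⟨h, hh, Finset.sum_congr rfl fun k _ => hg k⟩
  · rintro ⟨h, hh, rfl⟩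
    exact ⟨fun k => ⟨_, Trade.mul_payoff_mem_gains (hh k)⟩, rfl⟩

/-- Trades offering the payoffs in `S`, in deterministic amounts. -/
noncomputable def staticTrades (S : Finset (α → ℝ)) : List (Trade α) :=
  S.toList.map fun f => ⟨⊥, f⟩

lemma mem_staticTrades {S : Finset (α → ℝ)} {p : Trade α} :
    p ∈ staticTrades S ↔ ∃ f ∈ S, ⟨⊥, f⟩ = p := by
  simp only [staticTrades, List.mem_map, Finset.mem_toList]

lemma Trade.gains_bot (f : α → ℝ) : Trade.gains ⟨⊥, f⟩ = Submodule.span ℝ {f} := by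
  ext g
  rw [Submodule.mem_span_singleton]
  constructor
  · rintro ⟨h, hh, rfl⟩
    obtain ⟨c, rfl⟩ := stronglyMeasurable_bot_iff.1 hh.stronglyMeasurable
    exact ⟨c, rfl⟩
  · rintro ⟨c, rfl⟩
    exact ⟨fun _ => c, measurable_const, rfl⟩

lemma gains_staticTrades (S : Finset (α → ℝ)) : gains (staticTrades S) = Submodule.span ℝ S := by
  rw [Submodule.span_eq_iSup_of_singleton_spans]
  simp only [gains, mem_staticTrades, iSup_exists, iSup_and, Finset.mem_coe, ← Trade.gains_bot]
  rw [iSup_comm]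
  refine iSup_congr fun f => ?_
  rw [iSup_comm]
  simp only [iSup_iSup_eq_right]

/-- Trades buying the assets with prices `S` at a time `s < T` and selling them at time `s + 1`. -/
def priceTrades {J : ℕ} (F : ℕ → MeasurableSpace α) (T : ℕ) (S : Fin J → ℕ → α → ℝ) :
    List (Trade α) :=
  (List.range T).flatMap fun s => (List.finRange J).map fun j => ⟨F s, S j (s + 1) - S j s⟩

variable {J : ℕ} {F : ℕ → MeasurableSpace α} {T : ℕ} {S : Fin J → ℕ → α → ℝ}

lemma mem_priceTrades {p : Trade α} :
    p ∈ priceTrades F T S ↔ ∃ q : Fin J × Fin T, ⟨F q.2, S q.1 (q.2 + 1) - S q.1 q.2⟩ = p := by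
  simp only [priceTrades, List.mem_flatMap, List.mem_range, List.mem_map, List.mem_finRange,
    true_and, Prod.exists, Fin.exists_iff, exists_prop]
  tauto

lemma mem_gains_priceTrades {f : α → ℝ} :
    f ∈ gains (priceTrades F T S) ↔ ∃ H : Fin J → Fin T → α → ℝ,
      (∀ j (s : Fin T), Measurable[F s] (H j s)) ∧
        f = ∑ j, ∑ s, H j s * (S j (s + 1) - S j s) := by
  rw [mem_gains_iff_exists_sum fun _ => mem_priceTrades]
  simp only [Fintype.sum_prod_type, Prod.forall]
  exact ⟨fun ⟨H, hH⟩ => ⟨fun j s => H (j, s), hH⟩, fun ⟨H, hH⟩ => ⟨fun q => H q.1 q.2, hH⟩⟩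

lemma pairwise_staticTrades_append_priceTrades (hF : Monotone F) (E : Finset (α → ℝ)) :
    (staticTrades E ++ priceTrades F T S).Pairwise fun p q => p.info ≤ q.info := by
  have hstatic : ∀ p ∈ staticTrades E, p.info = ⊥ := by
    simp only [mem_staticTrades]
    rintro _ ⟨f, -, rfl⟩
    rfl
  refine List.pairwise_append.2 ⟨?_, ?_, fun p hp q _ => (hstatic p hp).trans_le bot_le⟩
  · exact List.Pairwise.imp_of_mem (fun hp _ _ => (hstatic _ hp).trans_le bot_le)
      (List.pairwise_of_forall fun _ _ => trivial)
  · refine List.pairwise_flatMap.2 ⟨fun s _ => ?_, List.pairwise_lt_range.imp fun {s t} hst => ?_⟩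
    · exact List.pairwise_map.2 (List.pairwise_of_forall fun _ _ => le_rfl)
    · simp only [List.mem_map]
      rintro _ ⟨j, -, rfl⟩ _ ⟨j', -, rfl⟩
      exact hF hst.le

end ListsOfTrades

section CollectiveMarket

variable {N R J : ℕ}

/-- The price processes of the assets in `A`; the assets outside `A`, which are not traded, are
given the price `0`. -/
def tradedPrice (A : Finset (Fin J)) (X : Fin J → ℕ → Ω → ℝ) (j : Fin J) (t : ℕ) (ω : Ω) : ℝ :=
  if j ∈ A then X j t ω else 0

lemma tradedPrice_of_mem {A : Finset (Fin J)} {X : Fin J → ℕ → Ω → ℝ} {j : Fin J} (hj : j ∈ A) :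
    tradedPrice A X j = X j :=
  funext₂ fun _ _ => if_pos hj

lemma tradedPrice_of_notMem {A : Finset (Fin J)} {X : Fin J → ℕ → Ω → ℝ} {j : Fin J}
    (hj : j ∉ A) : tradedPrice A X j = 0 :=
  funext₂ fun _ _ => if_neg hj

lemma sum_Icc_one_eq_sum_fin (T : ℕ) (φ : ℕ → ℝ) :
    ∑ s ∈ Finset.Icc 1 T, φ s = ∑ s : Fin T, φ (s + 1) := by
  rw [← Finset.sum_range fun s => φ (s + 1), Finset.range_eq_Ico, Finset.sum_Ico_add' φ 0 T 1]
  rfl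

lemma sum_position_mul_tradedPrice {T : ℕ} {A : Finset (Fin J)} {X : Fin J → ℕ → Ω → ℝ}
    {H : Fin J → Fin T → Ω → ℝ} {H' : Fin J → ℕ → Ω → ℝ}
    (hH : ∀ j ∈ A, ∀ s : Fin T, H j s = H' j (s + 1)) :
    ∑ j, ∑ s : Fin T, H j s * (tradedPrice A X j (s + 1) - tradedPrice A X j s) =
      fun ω => ∑ j ∈ A, ∑ s ∈ Finset.Icc 1 T, H' j s ω * (X j s ω - X j (s - 1) ω) := by
  funext ω
  simp only [Finset.sum_apply, Pi.mul_apply, Pi.sub_apply, sum_Icc_one_eq_sum_fin,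
    Nat.add_sub_cancel]
  refine (Finset.sum_subset_zero_on_sdiff (Finset.subset_univ A) (fun j hj => ?_)
    fun j hj => ?_).symm
  · simp only [tradedPrice_of_notMem (Finset.mem_sdiff.1 hj).2, Pi.zero_apply, sub_zero, mul_zero,
      Finset.sum_const_zero]
  · simp only [tradedPrice_of_mem hj, hH j hj]

lemma mem_gainsSet_iff {F : ℕ → MeasurableSpace Ω} {T : ℕ} {A : Finset (Fin J)}
    {X : Fin J → ℕ → Ω → ℝ} {g : Ω → ℝ} :
    g ∈ gainsSet F T A X ↔ g ∈ gains (priceTrades F T (tradedPrice A X)) := by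
  rw [mem_gains_priceTrades]
  constructor
  · rintro ⟨H, hH, rfl⟩
    refine ⟨fun j s => if j ∈ A then H j (s + 1) else 0, fun j s => ?_,
      (sum_position_mul_tradedPrice fun j hj s => if_pos hj).symm⟩
    by_cases hj : j ∈ A
    · simpa only [if_pos hj] using hH j hj (s + 1) (by omega) s.2
    · simpa only [if_neg hj] using! measurable_const
  · rintro ⟨H, hH, rfl⟩
    refine ⟨fun j t => if h : t - 1 < T then H j ⟨t - 1, h⟩ else 0, fun j _ t ht htT => ?_,
      sum_position_mul_tradedPrice fun j _ s => by simp only [Nat.add_sub_cancel, dif_pos s.2]⟩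
    have h : t - 1 < T := by omega
    simpa only [dif_pos h] using hH j ⟨t - 1, h⟩

/-- The price processes in the market of all agents, where the copy of `Ω` with index `i` carries
the prices of the assets agent `i` trades. -/
def jointPrice (assets : Fin N → Finset (Fin J)) (X : Fin J → ℕ → Ω → ℝ) (j : Fin J) (t : ℕ)
    (x : Σ _ : Fin N, Ω) : ℝ :=
  tradedPrice (assets x.1) X j t x.2

lemma mem_gains_jointPrice {F : Fin N → ℕ → MeasurableSpace Ω} {T : ℕ}
    {assets : Fin N → Finset (Fin J)} {X : Fin J → ℕ → Ω → ℝ} {f : (Σ _ : Fin N, Ω) → ℝ} :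
    f ∈ gains (priceTrades (fun s => jointSpace fun i => F i s) T (jointPrice assets X)) ↔
      ∀ i, (fun ω => f ⟨i, ω⟩) ∈ gainsSet (F i) T (assets i) X := by
  simp only [mem_gainsSet_iff, mem_gains_priceTrades, measurable_jointSpace]
  constructor
  · rintro ⟨H, hH, rfl⟩ i
    refine ⟨fun j s ω => H j s ⟨i, ω⟩, fun j s => hH j s i, funext fun ω => ?_⟩
    simp only [Finset.sum_apply, Pi.mul_apply, Pi.sub_apply, jointPrice]
  · intro h
    choose H hH hf using h
    refine ⟨fun j s x => H x.1 j s x.2, fun j s i => hH i j s, funext fun ⟨i, ω⟩ => ?_⟩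
    refine (congrFun (hf i) ω).trans ?_
    simp only [Finset.sum_apply, Pi.mul_apply, Pi.sub_apply, jointPrice]

/-- The deterministic zero-sum exchange paying one unit to agent `r`, financed equally by all
agents. -/
noncomputable def unitExchange (r : Fin N) (x : Σ _ : Fin N, Ω) : ℝ :=
  (if x.1 = r then 1 else 0) - 1 / N

lemma sum_smul_unitExchange (c : Fin N → ℝ) (x : Σ _ : Fin N, Ω) :
    (∑ r, c r • unitExchange r) x = c x.1 - (∑ r, c r) / N := by
  simp only [Finset.sum_apply, Pi.smul_apply, unitExchange, smul_eq_mul, mul_sub,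
    Finset.sum_sub_distrib, mul_ite, mul_one, mul_zero, Finset.sum_ite_eq, Finset.mem_univ, if_true,
    mul_one_div, Finset.sum_div]

open scoped Classical in
/-- The payoffs, in the market of all agents, that generate the exchanges `spanExch Ys`. -/
noncomputable def exchangePayoffs (Ys : Fin R → Fin N → Ω → ℝ) : Finset ((Σ _ : Fin N, Ω) → ℝ) :=
  (Finset.univ.image fun r x => Ys r x.1 x.2) ∪ Finset.univ.image unitExchange

lemma mem_exchangePayoffs {Ys : Fin R → Fin N → Ω → ℝ} {f : (Σ _ : Fin N, Ω) → ℝ} :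
    f ∈ exchangePayoffs Ys ↔ (∃ r, (fun x => Ys r x.1 x.2) = f) ∨ ∃ r, unitExchange r = f := by
  simp only [exchangePayoffs, Finset.mem_union, Finset.mem_image, Finset.mem_univ, true_and]

lemma mem_span_exchangePayoffs {Ys : Fin R → Fin N → Ω → ℝ} {f : (Σ _ : Fin N, Ω) → ℝ} :
    f ∈ Submodule.span ℝ (exchangePayoffs Ys : Set ((Σ _ : Fin N, Ω) → ℝ)) ↔
      (fun i ω => f ⟨i, ω⟩) ∈ spanExch Ys := by
  simp only [exchangePayoffs, Finset.coe_union, Finset.coe_image, Finset.coe_univ, Set.image_univ,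
    Submodule.span_union, Submodule.mem_sup, Submodule.mem_span_range_iff_exists_fun]
  constructor
  · rintro ⟨_, ⟨c, rfl⟩, _, ⟨d, rfl⟩, rfl⟩
    refine ⟨fun i => d i - (∑ r, d r) / N, c, ?_, fun i => funext fun ω => ?_⟩
    · rw [Finset.sum_sub_distrib, sub_eq_zero, Finset.sum_const, Finset.card_univ,
        Fintype.card_fin, nsmul_eq_mul]
      rcases N.eq_zero_or_pos with rfl | hN
      · simp only [Finset.univ_eq_empty, Finset.sum_empty, zero_div, mul_zero]
      · exact (mul_div_cancel₀ _ (Nat.cast_ne_zero.2 hN.ne')).symm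
    · beta_reduce
      rw [Pi.add_apply, sum_smul_unitExchange, add_comm]
      simp only [Finset.sum_apply, Pi.smul_apply, smul_eq_mul]
  · rintro ⟨x, c, hx, hf⟩
    refine ⟨_, ⟨c, rfl⟩, _, ⟨x, rfl⟩, funext fun ⟨i, ω⟩ => ?_⟩
    rw [Pi.add_apply, sum_smul_unitExchange, hx, zero_div, sub_zero, add_comm]
    refine Eq.trans ?_ (congrFun (hf i) ω).symm
    simp only [Finset.sum_apply, Pi.smul_apply, smul_eq_mul]

/-- The market of all agents: they first agree on an exchange, then trade their assets. -/
noncomputable def collectiveTrades (F : Fin N → ℕ → MeasurableSpace Ω) (T : ℕ)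
    (assets : Fin N → Finset (Fin J)) (X : Fin J → ℕ → Ω → ℝ) (Ys : Fin R → Fin N → Ω → ℝ) :
    List (Trade (Σ _ : Fin N, Ω)) :=
  staticTrades (exchangePayoffs Ys) ++
    priceTrades (fun s => jointSpace fun i => F i s) T (jointPrice assets X)

variable [MeasurableSpace Ω] {P : Measure Ω} {F : Fin N → ℕ → MeasurableSpace Ω} {T : ℕ}
  {assets : Fin N → Finset (Fin J)} {X : Fin J → ℕ → Ω → ℝ} {Ys : Fin R → Fin N → Ω → ℝ}

theorem nca_spanExch_iff_noArbitrage :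
    NCA P (fun i => gainsSet (F i) T (assets i) X) (spanExch Ys) ↔
      NoArbitrage (jointMeasure fun _ : Fin N => P) (gains (collectiveTrades F T assets X Ys)) := by
  rw [collectiveTrades, gains_append, gains_staticTrades]
  constructor
  · intro h f hf hf0
    obtain ⟨e, he, k, hk, rfl⟩ := Submodule.mem_sup.1 hf
    have h0 := h (fun i ω => k ⟨i, ω⟩) _ (mem_span_exchangePayoffs.1 he) (mem_gains_jointPrice.1 hk)
      fun i => (ae_jointMeasure_iff.1 hf0 i).mono fun ω hω => by rwa [add_comm]
    exact ae_jointMeasure_iff.2 fun i => (h0 i).mono fun ω hω => by rwa [Pi.add_apply, add_comm]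
  · intro h k y hy hk h0
    refine ae_jointMeasure_iff.1 (h (fun x => k x.1 x.2 + y x.1 x.2) ?_ (ae_jointMeasure_iff.2 h0))
    rw [sup_comm]
    exact Submodule.add_mem_sup (mem_gains_jointPrice.2 hk) (mem_span_exchangePayoffs.2 hy)

end CollectiveMarket

section Martingale

variable {α : Type*} {m0 : MeasurableSpace α} {μ : Measure α}

lemma Trade.isFair_sub_iff [IsFiniteMeasure μ] {𝓗 : MeasurableSpace α} (h𝓗 : 𝓗 ≤ m0)
    {x y : α → ℝ} (hx : Integrable x μ) (hy : Integrable y μ) (hxm : Measurable[𝓗] x) :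
    Trade.IsFair ⟨𝓗, y - x⟩ μ ↔ x =ᵐ[μ] μ[y | 𝓗] := by
  constructor
  · intro h
    refine ae_eq_condExp_of_forall_setIntegral_eq h𝓗 hy (fun _ _ _ => hx.integrableOn)
      (fun s hs _ => ?_) hxm.stronglyMeasurable.aestronglyMeasurable
    have := h.setIntegral_eq_zero s hs
    rw [integral_sub' hy.integrableOn hx.integrableOn, sub_eq_zero] at this
    exact this.symm
  · intro h
    refine ⟨hy.sub hx, fun s hs => ?_⟩
    rw [integral_sub' hy.integrableOn hx.integrableOn, ← setIntegral_condExp h𝓗 hy hs,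
      setIntegral_congr_ae (h𝓗 s hs) (h.mono fun _ hω _ => hω), sub_self]

lemma ae_eq_condExp_of_forall_succ [IsFiniteMeasure μ] {F : ℕ → MeasurableSpace α}
    (hF : Monotone F) (hFle : ∀ t, F t ≤ m0) {T : ℕ} {x : ℕ → α → ℝ}
    (hxm : ∀ t ≤ T, Measurable[F t] (x t)) (hx : ∀ t ≤ T, Integrable (x t) μ)
    (hsucc : ∀ s < T, x s =ᵐ[μ] μ[x (s + 1) | F s]) {s t : ℕ} (hst : s ≤ t) (ht : t ≤ T) :
    x s =ᵐ[μ] μ[x t | F s] := by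
  induction t, hst using Nat.le_induction with
  | base =>
    rw [condExp_of_stronglyMeasurable (hFle s) (hxm s ht).stronglyMeasurable (hx s ht)]
  | succ t hst ih =>
    exact (ih (Nat.le_of_succ_le ht)).trans
      ((condExp_congr_ae (hsucc t ht)).trans (condExp_condExp_of_le (hF hst) (hFle t)))

lemma forall_priceTrades_isFair_iff [IsFiniteMeasure μ] {J : ℕ} {F : ℕ → MeasurableSpace α}
    (hF : Monotone F) (hFle : ∀ t, F t ≤ m0) {T : ℕ} {S : Fin J → ℕ → α → ℝ}
    (hSm : ∀ j, ∀ t ≤ T, Measurable[F t] (S j t)) (hS : ∀ j, ∀ t ≤ T, Integrable (S j t) μ) :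
    (∀ p ∈ priceTrades F T S, p.IsFair μ) ↔
      ∀ j s t, s ≤ t → t ≤ T → S j s =ᵐ[μ] μ[S j t | F s] := by
  have hstep (j : Fin J) {s : ℕ} (hs : s < T) := Trade.isFair_sub_iff (hFle s)
    (hS j s hs.le) (hS j (s + 1) hs) (hSm j s hs.le)
  simp only [mem_priceTrades, forall_exists_index, forall_apply_eq_imp_iff]
  refine ⟨fun h j s t hst ht => ?_, fun h q => ?_⟩
  · exact ae_eq_condExp_of_forall_succ hF hFle (hSm j) (hS j)
      (fun s hs => (hstep j hs).1 (h (j, ⟨s, hs⟩))) hst ht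
  · exact (hstep q.1 q.2.2).2 (h q.1 q.2 (q.2 + 1) (Nat.le_succ _) q.2.2)

lemma Trade.isFair_bot_iff {f : α → ℝ} :
    Trade.IsFair ⟨⊥, f⟩ μ ↔ Integrable f μ ∧ ∫ x, f x ∂μ = 0 := by
  refine ⟨fun h => ⟨h.integrable, ?_⟩, fun h => ⟨h.1, fun s hs => ?_⟩⟩
  · simpa only [setIntegral_univ] using h.setIntegral_eq_zero _ (@MeasurableSet.univ α ⊥)
  · rcases MeasurableSpace.measurableSet_bot_iff.1 hs with rfl | rfl
    · exact setIntegral_empty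
    · rw [setIntegral_univ, h.2]

lemma forall_staticTrades_isFair_iff {E : Finset (α → ℝ)} :
    (∀ p ∈ staticTrades E, p.IsFair μ) ↔
      ∀ f ∈ Submodule.span ℝ (E : Set (α → ℝ)), Integrable f μ ∧ ∫ x, f x ∂μ = 0 := by
  simp only [mem_staticTrades, forall_exists_index, and_imp, forall_apply_eq_imp_iff₂,
    Trade.isFair_bot_iff]
  refine ⟨fun h f hf => ?_, fun h f hf => h f (Submodule.subset_span hf)⟩
  induction hf using Submodule.span_induction with
  | mem f hf => exact h f hf
  | zero => exact ⟨integrable_zero _ _ _, integral_zero _ _⟩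
  | add f g _ _ hf hg =>
    exact ⟨hf.1.add hg.1, by rw [integral_add' hf.1 hg.1, hf.2, hg.2, add_zero]⟩
  | smul c f _ hf =>
    exact ⟨hf.1.smul c, by simp only [Pi.smul_apply, integral_smul, hf.2, smul_zero]⟩

end Martingale

section CollectiveMartingaleMeasures

variable {m0 : MeasurableSpace Ω} {N R J : ℕ} {P : Measure Ω}
  {Q : Fin N → Measure Ω} {F : Fin N → ℕ → MeasurableSpace Ω} {T : ℕ}
  {assets : Fin N → Finset (Fin J)} {X : Fin J → ℕ → Ω → ℝ} {Ys : Fin R → Fin N → Ω → ℝ}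

lemma forall_tradedPrice {A : Finset (Fin J)} {q : (ℕ → Ω → ℝ) → Prop} (h0 : q 0) :
    (∀ j, q (tradedPrice A X j)) ↔ ∀ j ∈ A, q (X j) := by
  refine forall_congr' fun j => ?_
  by_cases hj : j ∈ A
  · simp only [tradedPrice_of_mem hj, hj, true_imp_iff]
  · simp only [tradedPrice_of_notMem hj, hj, false_imp_iff, h0]

lemma measurable_tradedPrice {F : ℕ → MeasurableSpace Ω} {A : Finset (Fin J)}
    (hX : ∀ j ∈ A, ∀ t ≤ T, Measurable[F t] (X j t)) :
    ∀ j, ∀ t ≤ T, Measurable[F t] (tradedPrice A X j t) :=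
  (forall_tradedPrice (q := fun x => ∀ t ≤ T, Measurable[F t] (x t))
    fun _ _ => measurable_const).2 hX

lemma mem_martMeasures_iff {F : ℕ → MeasurableSpace Ω} (hF : Monotone F) (hFle : ∀ t, F t ≤ m0)
    {A : Finset (Fin J)} (hX : ∀ j ∈ A, ∀ t ≤ T, Measurable[F t] (X j t)) {Q : Measure Ω} :
    Q ∈ martMeasures P F T A X ↔ IsProbabilityMeasure Q ∧ Q ≪ P ∧ P ≪ Q ∧
      (∀ j, ∀ t ≤ T, Integrable (tradedPrice A X j t) Q) ∧
        ∀ p ∈ priceTrades F T (tradedPrice A X), p.IsFair Q := by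
  refine and_congr_right fun _ => and_congr_right fun _ => and_congr_right fun _ => ?_
  rw [forall₂_and, ← forall_tradedPrice (q := fun x => ∀ t ≤ T, Integrable (x t) Q)
    fun _ _ => integrable_zero _ _ _]
  refine and_congr_right fun hint => ?_
  rw [forall_priceTrades_isFair_iff hF hFle (measurable_tradedPrice hX) hint]
  refine (forall_tradedPrice
    (q := fun x => ∀ s t, s ≤ t → t ≤ T → x s =ᵐ[Q] Q[x t | F s]) fun s t _ _ => ?_).symm
  simp only [Pi.zero_apply, condExp_zero]
  rfl

lemma forall_jointPrice_isFair_iff (hFle : ∀ i t, F i t ≤ m0) :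
    (∀ p ∈ priceTrades (fun s => jointSpace fun i => F i s) T (jointPrice assets X),
        p.IsFair (jointMeasure Q)) ↔
      ∀ i, ∀ p ∈ priceTrades (F i) T (tradedPrice (assets i) X), p.IsFair (Q i) := by
  simp only [mem_priceTrades, forall_exists_index, forall_apply_eq_imp_iff]
  rw [forall_comm]
  exact forall_congr' fun q => isFair_jointMeasure_iff fun i => hFle i q.2

lemma forall_exchange_isFair_iff :
    (∀ p ∈ staticTrades (exchangePayoffs Ys), p.IsFair (jointMeasure Q)) ↔
      (∀ y ∈ spanExch Ys, ∀ i, Integrable (y i) (Q i)) ∧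
        ∀ y ∈ spanExch Ys, ∑ i, ∫ ω, y i ω ∂Q i ≤ 0 := by
  rw [forall_staticTrades_isFair_iff]
  constructor
  · intro h
    have hfair (y) (hy : y ∈ spanExch Ys) :=
      h (fun x => y x.1 x.2) (mem_span_exchangePayoffs.2 hy)
    refine ⟨fun y hy => integrable_jointMeasure_iff.1 (hfair y hy).1, fun y hy => ?_⟩
    exact ((integral_jointMeasure (hfair y hy).1).symm.trans (hfair y hy).2).le
  · rintro ⟨hint, hle⟩ f hf
    have hfint : Integrable f (jointMeasure Q) :=
      integrable_jointMeasure_iff.2 (hint _ (mem_span_exchangePayoffs.1 hf))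
    refine ⟨hfint, le_antisymm ?_ ?_⟩
    · rw [integral_jointMeasure hfint]
      exact hle _ (mem_span_exchangePayoffs.1 hf)
    · rw [← neg_nonpos, ← integral_neg', integral_jointMeasure hfint.neg]
      exact hle _ (mem_span_exchangePayoffs.1 (neg_mem hf))

theorem mem_MeY_spanExch_iff (hF : ∀ i, Monotone (F i)) (hFle : ∀ i t, F i t ≤ m0)
    (hX : ∀ i, ∀ j ∈ assets i, ∀ t ≤ T, Measurable[F i t] (X j t)) :
    Q ∈ MeY P F T assets X (spanExch Ys) ↔ (∀ i, IsProbabilityMeasure (Q i)) ∧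
      (∀ i, Q i ≪ P) ∧ (∀ i, P ≪ Q i) ∧
      (∀ j, ∀ t ≤ T, Integrable (jointPrice assets X j t) (jointMeasure Q)) ∧
      ∀ p ∈ collectiveTrades F T assets X Ys, p.IsFair (jointMeasure Q) := by
  simp only [collectiveTrades, List.mem_append, or_imp, forall_and, forall_exchange_isFair_iff,
    forall_jointPrice_isFair_iff hFle, integrable_jointMeasure_iff]
  have hmart : (∀ i, Q i ∈ martMeasures P (F i) T (assets i) X) ↔ _ :=
    forall_congr' fun i => mem_martMeasures_iff (hF i) (hFle i) (hX i)
  simp only [MeY, Set.mem_ofPred_eq, hmart, forall_and, jointPrice]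
  have hcomm : (∀ j, ∀ t ≤ T, ∀ i, Integrable (tradedPrice (assets i) X j t) (Q i)) ↔
      ∀ i j, ∀ t ≤ T, Integrable (tradedPrice (assets i) X j t) (Q i) :=
    ⟨fun h i j t ht => h j t ht i, fun h j t ht i => h i j t ht⟩
  rw [← hcomm]
  tauto

lemma jointMeasure_smul (c : ENNReal) :
    jointMeasure (fun i => c • Q i) = c • jointMeasure Q := by
  simp only [jointMeasure, Measure.map_smul, Finset.smul_sum]

lemma measureReal_univ_eq_of_integral_unitExchange [∀ i, IsFiniteMeasure (Q i)] {r : Fin N}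
    (h : ∫ x, unitExchange r x ∂jointMeasure Q = 0) :
    (Q r).real Set.univ = (∑ i, (Q i).real Set.univ) / N := by
  set c : Fin N → ℝ := fun i => (if i = r then 1 else 0) - 1 / N
  have hc (i : Fin N) : ∫ ω, unitExchange r ⟨i, ω⟩ ∂Q i = (Q i).real Set.univ * c i :=
    integral_const (c i)
  rw [integral_jointMeasure (integrable_jointMeasure_iff.2 fun i => integrable_const (c i))] at h
  simp only [hc, c, mul_sub, mul_ite, mul_one, mul_zero, Finset.sum_sub_distrib,
    Finset.sum_ite_eq', Finset.mem_univ, if_true, mul_one_div, ← Finset.sum_div] at h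
  exact sub_eq_zero.1 h

lemma exists_isProbabilityMeasure_smul [∀ i, IsFiniteMeasure (Q i)] (hQ : ∀ i, Q i ≠ 0)
    (h : ∀ r, ∫ x, unitExchange r x ∂jointMeasure Q = 0) :
    ∃ c : ENNReal, c ≠ 0 ∧ c ≠ ⊤ ∧ ∀ i, IsProbabilityMeasure (c • Q i) := by
  rcases isEmpty_or_nonempty (Fin N) with _ | ⟨⟨i₀⟩⟩
  · exact ⟨1, one_ne_zero, ENNReal.one_ne_top, isEmptyElim⟩
  have hmass (i : Fin N) : Q i Set.univ = Q i₀ Set.univ :=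
    (measureReal_eq_measureReal_iff).1 <| (measureReal_univ_eq_of_integral_unitExchange (h i)).trans
      (measureReal_univ_eq_of_integral_unitExchange (h i₀)).symm
  have h0 : Q i₀ Set.univ ≠ 0 := Measure.measure_univ_ne_zero.2 (hQ i₀)
  refine ⟨(Q i₀ Set.univ)⁻¹, ENNReal.inv_ne_zero.2 (measure_ne_top _ _), ENNReal.inv_ne_top.2 h0,
    fun i => ⟨?_⟩⟩
  rw [Measure.smul_apply, smul_eq_mul, hmass i, ENNReal.inv_mul_cancel h0 (measure_ne_top _ _)]

lemma Trade.IsFair.smul_measure {α : Type*} {_ : MeasurableSpace α} {μ : Measure α} {p : Trade α}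
    (hp : p.IsFair μ) {c : ENNReal} (hc : c ≠ ⊤) : p.IsFair (c • μ) :=
  ⟨hp.integrable.smul_measure hc, fun s hs => by
    rw [Measure.restrict_smul, integral_smul_measure, hp.setIntegral_eq_zero s hs, smul_zero]⟩

end CollectiveMartingaleMeasures

section FundamentalTheorem

variable {m0 : MeasurableSpace Ω} {N R J : ℕ} {P : Measure Ω}
  {Q : Fin N → Measure Ω} {F : Fin N → ℕ → MeasurableSpace Ω} {T : ℕ}
  {assets : Fin N → Finset (Fin J)} {X : Fin J → ℕ → Ω → ℝ} {Ys : Fin R → Fin N → Ω → ℝ}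

lemma pairwise_collectiveTrades (hF : ∀ i, Monotone (F i)) :
    (collectiveTrades F T assets X Ys).Pairwise fun p q => p.info ≤ q.info :=
  pairwise_staticTrades_append_priceTrades (fun _ _ hst => jointSpace_mono fun i => hF i hst) _

lemma info_le_of_mem_collectiveTrades (hFle : ∀ i t, F i t ≤ m0) {p : Trade (Σ _ : Fin N, Ω)}
    (hp : p ∈ collectiveTrades F T assets X Ys) : p.info ≤ jointSpace fun _ => m0 := by
  rw [collectiveTrades, List.mem_append, mem_staticTrades, mem_priceTrades] at hp
  obtain ⟨f, -, rfl⟩ | ⟨q, rfl⟩ := hp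
  · exact bot_le
  · exact jointSpace_mono fun i => hFle i q.2

lemma measurable_of_mem_exchangePayoffs (hYs : ∀ r i, Measurable (Ys r i))
    {f : (Σ _ : Fin N, Ω) → ℝ} (hf : f ∈ exchangePayoffs Ys) : Measurable f := by
  obtain ⟨r, rfl⟩ | ⟨r, rfl⟩ := mem_exchangePayoffs.1 hf
  · exact measurable_jointSpace.2 (hYs r)
  · exact measurable_jointSpace.2 fun i =>
      measurable_const (a := (if i = r then 1 else 0) - 1 / (N : ℝ))

lemma measurable_jointPrice (hFle : ∀ i t, F i t ≤ m0)
    (hX : ∀ i, ∀ j ∈ assets i, ∀ t ≤ T, Measurable[F i t] (X j t)) (j : Fin J) {t : ℕ}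
    (ht : t ≤ T) : Measurable (jointPrice assets X j t) :=
  measurable_jointSpace.2 fun i => (measurable_tradedPrice (hX i) j t ht).mono (hFle i t) le_rfl

lemma measurable_payoff_of_mem_collectiveTrades (hFle : ∀ i t, F i t ≤ m0)
    (hX : ∀ i, ∀ j ∈ assets i, ∀ t ≤ T, Measurable[F i t] (X j t))
    (hYs : ∀ r i, Measurable (Ys r i)) {p : Trade (Σ _ : Fin N, Ω)}
    (hp : p ∈ collectiveTrades F T assets X Ys) : Measurable p.payoff := by
  rw [collectiveTrades, List.mem_append, mem_staticTrades, mem_priceTrades] at hp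
  obtain ⟨f, hf, rfl⟩ | ⟨q, rfl⟩ := hp
  · exact measurable_of_mem_exchangePayoffs hYs hf
  · exact (measurable_jointPrice hFle hX q.1 q.2.2).sub
      (measurable_jointPrice hFle hX q.1 q.2.2.le)

lemma NoArbitrage.exists_isFair_jointMeasure [IsFiniteMeasure P] (hF : ∀ i, Monotone (F i))
    (hFle : ∀ i t, F i t ≤ m0)
    (hX : ∀ i, ∀ j ∈ assets i, ∀ t ≤ T, Measurable[F i t] (X j t))
    (hYs : ∀ r i, Measurable (Ys r i))
    (hNA : NoArbitrage (jointMeasure fun _ : Fin N => P)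
      (gains (collectiveTrades F T assets X Ys))) :
    ∃ Q : Fin N → Measure Ω, (∀ i, IsFiniteMeasure (Q i)) ∧ (∀ i, Q i ≪ P) ∧ (∀ i, P ≪ Q i) ∧
      (∀ j, ∀ t ≤ T, Integrable (jointPrice assets X j t) (jointMeasure Q)) ∧
      ∀ p ∈ collectiveTrades F T assets X Ys, p.IsFair (jointMeasure Q) := by
  classical
  let prices : Finset ((Σ _ : Fin N, Ω) → ℝ) :=
    Finset.univ.image fun q : Fin J × Fin (T + 1) => jointPrice assets X q.1 q.2
  obtain ⟨ν, hν, hνP, hPν, hint, hfair⟩ := hNA.exists_isFair (pairwise_collectiveTrades hF)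
    (fun p => info_le_of_mem_collectiveTrades hFle)
    (fun p => measurable_payoff_of_mem_collectiveTrades hFle hX hYs) (S := prices)
    (Finset.forall_mem_image.2 fun q _ => measurable_jointPrice hFle hX q.1 q.2.is_le)
  rw [← jointMeasure_comap ν] at hνP hPν hint hfair
  refine ⟨_, fun i => ⟨?_⟩, jointMeasure_absolutelyContinuous_iff.1 hνP,
    jointMeasure_absolutelyContinuous_iff.1 hPν, fun j t ht => ?_, hfair⟩
  · rw [(measurableEmbedding_toCopy i).comap_apply]
    exact measure_lt_top ν _
  · let q : Fin J × Fin (T + 1) := (j, ⟨t, Nat.lt_succ_of_le ht⟩)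
    exact hint _ (Finset.mem_image_of_mem _ (Finset.mem_univ q))

lemma integral_unitExchange_eq_zero
    (hfair : ∀ p ∈ collectiveTrades F T assets X Ys, p.IsFair (jointMeasure Q)) (r : Fin N) :
    ∫ x, unitExchange r x ∂jointMeasure Q = 0 := by
  have hmem : unitExchange r ∈ exchangePayoffs Ys := mem_exchangePayoffs.2 (Or.inr ⟨r, rfl⟩)
  exact (Trade.isFair_bot_iff.1
    (hfair _ (List.mem_append_left _ (mem_staticTrades.2 ⟨_, hmem, rfl⟩)))).2

theorem nca_spanExch_iff_nonempty_MeY [IsFiniteMeasure P] [NeZero P] (hF : ∀ i, Monotone (F i))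
    (hFle : ∀ i t, F i t ≤ m0)
    (hX : ∀ i, ∀ j ∈ assets i, ∀ t ≤ T, Measurable[F i t] (X j t))
    (hYs : ∀ r i, Measurable (Ys r i)) :
    NCA P (fun i => gainsSet (F i) T (assets i) X) (spanExch Ys) ↔
      (MeY P F T assets X (spanExch Ys)).Nonempty := by
  rw [nca_spanExch_iff_noArbitrage]
  constructor
  · intro hNA
    obtain ⟨Q, hQ, hQP, hPQ, hint, hfair⟩ := hNA.exists_isFair_jointMeasure hF hFle hX hYs
    have hQ0 (i : Fin N) : Q i ≠ 0 := fun h =>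
      NeZero.ne P (Measure.absolutelyContinuous_zero_iff.1 (h ▸ hPQ i))
    obtain ⟨c, hc0, hc, hprob⟩ :=
      exists_isProbabilityMeasure_smul hQ0 (integral_unitExchange_eq_zero hfair)
    refine ⟨fun i => c • Q i, (mem_MeY_spanExch_iff hF hFle hX).2 ⟨hprob,
      fun i => Measure.smul_absolutelyContinuous.trans (hQP i),
      fun i => (hPQ i).trans (Measure.absolutelyContinuous_smul hc0), ?_⟩⟩
    rw [jointMeasure_smul]
    exact ⟨fun j t ht => (hint j t ht).smul_measure hc, fun p hp => (hfair p hp).smul_measure hc⟩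
  · rintro ⟨Q, hQ⟩
    obtain ⟨hprob, hQP, hPQ, -, hfair⟩ := (mem_MeY_spanExch_iff hF hFle hX).1 hQ
    exact (noArbitrage_gains_of_isFair (pairwise_collectiveTrades hF)
      (fun p => info_le_of_mem_collectiveTrades hFle) hfair).of_equivalent
      (jointMeasure_absolutelyContinuous_iff.2 hQP) (jointMeasure_absolutelyContinuous_iff.2 hPQ)

lemma mem_spanExch_self (y : Fin N → Ω → ℝ) : y ∈ spanExch fun _ : Fin 1 => y := by
  refine ⟨0, 1, Finset.sum_const_zero, fun i => funext fun ω => ?_⟩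
  simp only [Pi.zero_apply, Pi.one_apply, Finset.univ_unique, Finset.sum_const,
    Finset.card_singleton, one_smul, one_mul, zero_add]

lemma spanExch_subset {𝒴 : Set (Fin N → Ω → ℝ)} (h0 : zeroSum Ω N ⊆ 𝒴)
    (hadd : ∀ y ∈ 𝒴, ∀ z ∈ 𝒴, (fun i ω => y i ω + z i ω) ∈ 𝒴)
    (hsmul : ∀ y ∈ 𝒴, ∀ c : ℝ, (fun i ω => c * y i ω) ∈ 𝒴) {y : Fin N → Ω → ℝ} (hy : y ∈ 𝒴) :
    spanExch (fun _ : Fin 1 => y) ⊆ 𝒴 := by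
  rintro z ⟨x, c, hx, hz⟩
  have hz' : z = fun i ω => x i + c 0 * y i ω := by
    funext i
    simp only [hz i, Finset.univ_unique, Fin.default_eq_zero, Finset.sum_singleton]
  rw [hz']
  exact hadd (fun i _ => x i) (h0 ⟨x, hx, fun _ => rfl⟩) _ (hsmul y hy (c 0))

theorem collective_FTAP_I_spans_general [IsFiniteMeasure P] [NeZero P] (hF : ∀ i, Monotone (F i))
    (hFle : ∀ i t, F i t ≤ m0)
    (hX : ∀ i, ∀ j ∈ assets i, ∀ t ≤ T, Measurable[F i t] (X j t))
    {𝒴 : Set (Fin N → Ω → ℝ)} (hmeas : ∀ y ∈ 𝒴, ∀ i, Measurable (y i))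
    (hspan : ∀ y ∈ 𝒴, spanExch (fun _ : Fin 1 => y) ⊆ 𝒴) :
    NCA P (fun i => gainsSet (F i) T (assets i) X) 𝒴 ↔
      ∀ y ∈ 𝒴, (MeY P F T assets X (spanExch fun _ : Fin 1 => y)).Nonempty := by
  have hFTAP (y) (hy : y ∈ 𝒴) := nca_spanExch_iff_nonempty_MeY (P := P) (Ys := fun _ : Fin 1 => y)
    hF hFle hX fun _ => hmeas y hy
  constructor
  · exact fun h y hy => (hFTAP y hy).1 fun k z hz => h k z (hspan y hy hz)
  · exact fun h k y hy => (hFTAP y hy).2 (h y hy) k y (mem_spanExch_self y)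

end FundamentalTheorem

/-- collective FTAP I via one-dimensional spans (Corollary cor1). -/
theorem collective_FTAP_I_spans
    {Ω : Type*} [m0 : MeasurableSpace Ω]
    (P : Measure Ω) [IsProbabilityMeasure P]
    (T J N : ℕ) (hT : 1 ≤ T) (hJ : 1 ≤ J) (hN : 1 ≤ N)
    (F : Fin N → ℕ → MeasurableSpace Ω)
    (hFmono : ∀ i, Monotone (F i))
    (hFle : ∀ i t, F i t ≤ m0)
    (hFzero : ∀ i, ∀ A : Set Ω, MeasurableSet[F i 0] A → P A = 0 ∨ P A = 1)
    (X : Fin J → ℕ → Ω → ℝ)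
    (assets : Fin N → Finset (Fin J))
    (hassets : ∀ i, (assets i).Nonempty)
    (hcover : ∀ j, ∃ i, j ∈ assets i)
    (hadapted : ∀ i, ∀ j ∈ assets i, ∀ t, t ≤ T → Measurable[F i t] (X j t))
    (𝒴 : Set (Fin N → Ω → ℝ))
    (h𝒴meas : ∀ y ∈ 𝒴, ∀ i, Measurable[F i T] (y i))
    (h𝒴R0 : zeroSum Ω N ⊆ 𝒴)
    (h𝒴add : ∀ y ∈ 𝒴, ∀ z ∈ 𝒴, (fun i ω => y i ω + z i ω) ∈ 𝒴)
    (h𝒴smul : ∀ y ∈ 𝒴, ∀ c : ℝ, (fun i ω => c * y i ω) ∈ 𝒴) :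
    NCA P (fun i => gainsSet (F i) T (assets i) X) 𝒴 ↔
      ∀ y ∈ 𝒴, (MeY P F T assets X (spanExch (fun _ : Fin 1 => y))).Nonempty :=
  collective_FTAP_I_spans_general hFmono hFle hadapted
    (fun y hy i => (h𝒴meas y hy i).mono (hFle i T) le_rfl)
    fun _ => spanExch_subset h𝒴R0 h𝒴add h𝒴smul

end CollectiveArb
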